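/- arXiv:1603.07922 — 2 statements merged into one kernel-verified Lean document; each statement's English description precedes it below -/
import Mathlib

section
/- Let S be a finite set of prime numbers and let a be a positive integer. There exists a constant C, depending only on S and a, with the following property: if x, y, w are S-units with gcd(x, y) ≤ a, and n ≥ 2 and z are integers with |z| > 1 satisfying x + y = w·z^n, then n ≤ C. -/
/-- An `S`-unit: a nonzero integer all of whose prime divisors belong to `S`. -/
def IsSUnit (S : Finset ℕ) (x : ℤ) : Prop :=
  x ≠ 0 ∧ ∀ p : ℕ, p.Prime → (p : ℤ) ∣ x → p ∈ S

theorem choose_mul_choose_expand (b i j : ℕ) :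
    b.choose i * b.choose j =
      ∑ k ∈ Finset.range (j+1), (i.choose (j-k) * (i+k).choose i) * b.choose (i+k) := by
  rcases lt_or_ge b i with h | h
  · rw [Nat.choose_eq_zero_of_lt h, zero_mul]
    symm
    apply Finset.sum_eq_zero
    intro k _
    rw [Nat.choose_eq_zero_of_lt (by omega : b < i + k), mul_zero]
  · obtain ⟨d, rfl⟩ := Nat.exists_eq_add_of_le h
    conv_lhs => rw [add_comm i d, Nat.add_choose_eq d i j, Finset.Nat.sum_antidiagonal_eq_sum_range_succ_mk, Finset.mul_sum]
    apply Finset.sum_congr rfl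
    intro k _
    rcases lt_or_ge d k with hk | hk
    · simp [Nat.choose_eq_zero_of_lt hk, Nat.choose_eq_zero_of_lt (by omega : i + d < i + k)]
    · have := Nat.choose_mul (n := i+d) (k := i+k) (s := i) (by omega)
      simp only [Nat.add_sub_cancel_left] at this
      rw [add_comm d i]
      calc _ = ((i+d).choose i * d.choose k) * i.choose (j-k) := by ring
        _ = _ := by rw [← this]; ring
theorem exists_det_ne_zero {F : Type*} [Field F] {ι κ : Type*} [Fintype ι] [DecidableEq ι] [Finite κ]
    (f : ι → κ → F) (hf : LinearIndependent F f) :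
    ∃ e : ι → κ, (Matrix.of (fun i j => f i (e j))).det ≠ 0 := by
  classical
  cases nonempty_fintype κ
  have hr : (Matrix.of f).rank = Fintype.card ι := hf.rank_matrix
  have hspan : Submodule.span F (Set.range (Matrix.of f).col) = ⊤ := by
    apply Submodule.eq_top_of_finrank_eq
    rw [← Matrix.rank_eq_finrank_span_cols, hr, Module.finrank_fintype_fun_eq_card]
  obtain ⟨κ', a, ha, hs, hli⟩ := exists_linearIndependent' F (Matrix.of f).col
  rw [hspan] at hs
  have := Finite.of_injective a ha
  cases nonempty_fintype κ'
  let bs := Module.Basis.mk hli hs.ge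
  have hc : Fintype.card κ' = Fintype.card ι := by
    rw [← Module.finrank_eq_card_basis bs, Module.finrank_fintype_fun_eq_card]
  let eq := Fintype.equivOfCardEq hc
  refine ⟨fun j => a (eq.symm j), ?_⟩
  have h2 : LinearIndependent F (fun j => (Matrix.of f).col (a (eq.symm j))) :=
    hli.comp _ eq.symm.injective
  have h3 : IsUnit (Matrix.of (fun i j => f i (a (eq.symm j)))) := by
    rw [← Matrix.linearIndependent_cols_iff_isUnit]
    exact h2
  exact ((Matrix.isUnit_iff_isUnit_det _).1 h3).ne_zero
section
open Polynomial
variable {F : Type*} [Field F] [CharZero F]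

noncomputable def binPoly {M : ℕ} (c : Fin M → F) : F[X] :=
  ∑ i, C (c i / (Nat.factorial i : F)) * descPochhammer F i

theorem binPoly_eval {M : ℕ} (c : Fin M → F) (b : ℕ) :
    (binPoly c).eval (b : F) = ∑ i, c i * (b.choose i : F) := by
  unfold binPoly
  rw [eval_finsetSum]
  apply Finset.sum_congr rfl
  intro i _
  rw [eval_mul, eval_C, descPochhammer_eval_eq_descFactorial, Nat.descFactorial_eq_factorial_mul_choose]
  have : ((Nat.factorial i : ℕ) : F) ≠ 0 := by exact_mod_cast Nat.factorial_ne_zero _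
  push_cast
  field_simp

theorem binPoly_degree {M : ℕ} (c : Fin M → F) : (binPoly c).degree < M := by
  unfold binPoly
  rw [degree_lt_iff_coeff_zero]
  intro m hm
  rw [finsetSum_coeff]
  apply Finset.sum_eq_zero
  intro i _
  rw [coeff_C_mul, coeff_eq_zero_of_natDegree_lt, mul_zero]
  rw [descPochhammer_natDegree]
  omega

theorem binPoly_eq_zero {M : ℕ} (c : Fin M → F) (h : binPoly c = 0) : c = 0 := by
  funext ⟨i, hi⟩
  induction i using Nat.strong_induction_on with
  | _ i ih =>
    have := binPoly_eval c i
    rw [h, eval_zero, Finset.sum_eq_single ⟨i, hi⟩] at this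
    · simpa using this.symm
    · rintro ⟨k, hk⟩ _ hne
      rcases lt_trichotomy k i with h1 | h1 | h1
      · rw [ih k h1 hk]; simp
      · subst h1; exact absurd rfl hne
      · simp [Nat.choose_eq_zero_of_lt h1]
    · simp

theorem shift_identity {P R : F[X]} {β : F} (hβ : β ≠ 1)
    (h : taylor 1 P * R = C β * (P * taylor 1 R)) : P = 0 ∨ R = 0 := by
  by_contra! hc
  obtain ⟨hP, hR⟩ := hc
  have h1 := congrArg leadingCoeff h
  have ht : ∀ f : F[X], (taylor 1 f).leadingCoeff = f.leadingCoeff := by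
    intro f
    rw [taylor_apply, leadingCoeff_comp (by rw [natDegree_X_add_C]; norm_num),
      leadingCoeff_X_add_C, one_pow, mul_one]
  rw [leadingCoeff_mul, leadingCoeff_mul, leadingCoeff_mul, leadingCoeff_C, ht, ht] at h1
  have hp : P.leadingCoeff * R.leadingCoeff ≠ 0 :=
    mul_ne_zero (leadingCoeff_ne_zero.2 hP) (leadingCoeff_ne_zero.2 hR)
  apply hβ
  apply mul_right_cancel₀ hp
  rw [← h1, one_mul]

theorem degree_zero_of_roots {P : F[X]} {M : ℕ} (hd : P.degree < M) (B : Finset ℕ) (hB : M ≤ B.card)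
    (h : ∀ b ∈ B, P.eval (b : F) = 0) : P = 0 := by
  classical
  apply eq_zero_of_degree_lt_of_eval_finset_eq_zero (B.image (Nat.cast : ℕ → F))
  · rw [Finset.card_image_of_injective _ Nat.cast_injective]
    exact hd.trans_le (by exact_mod_cast hB)
  · intro x hx
    obtain ⟨b, hb, rfl⟩ := Finset.mem_image.1 hx
    exact h b hb

theorem indep {N : ℕ} (hN : 0 < N) (B good : Finset ℕ) (g : ℕ → F) (β : F) (hβ : β ≠ 1)
    (hgB : good ⊆ B) (hgood : ∀ b ∈ good, b + 1 ∈ B ∧ g (b+1) = β * g b)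
    (hcard : 3 * N ≤ good.card) (hg : ∀ b ∈ B, g b ≠ 0) :
    LinearIndependent F (fun (i : Fin (2*N) ⊕ Fin N) (b : B) =>
      Sum.elim (fun i : Fin (2*N) => ((b:ℕ).choose i : F)) (fun j : Fin N => g b * ((b:ℕ).choose j : F)) i) := by
  rw [Fintype.linearIndependent_iff]
  intro c hc
  set u : Fin (2*N) → F := fun i => c (Sum.inl i) with hu
  set v : Fin N → F := fun i => c (Sum.inr i) with hv
  have key : ∀ b ∈ B, (binPoly u).eval (b:F) + g b * (binPoly v).eval (b:F) = 0 := by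
    intro b hb
    have := congrFun hc ⟨b, hb⟩
    simp only [Fintype.sum_sum_type, Sum.elim_inl, Sum.elim_inr, Finset.sum_apply, Pi.smul_apply,
      smul_eq_mul, Pi.zero_apply] at this
    rw [binPoly_eval, binPoly_eval, Finset.mul_sum, ← this]
    congr 1
    apply Finset.sum_congr rfl
    intro i _
    simp only [hv]; ring
  have hcB : good.card ≤ B.card := Finset.card_le_card hgB
  have hid : taylor 1 (binPoly u) * binPoly v = C β * (binPoly u * taylor 1 (binPoly v)) := by
    rw [← sub_eq_zero]
    apply degree_zero_of_roots (M := 3*N) _ good hcard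
    · intro b hb
      obtain ⟨h1, h2⟩ := hgood b hb
      have e1 := key b (hgB hb)
      have e2 := key (b+1) h1
      rw [h2] at e2
      push_cast at e2
      simp only [eval_sub, eval_mul, eval_C, taylor_eval]
      linear_combination (eval (b:F) (binPoly v)) * e2 - β * (eval ((b:F)+1) (binPoly v)) * e1
    · have d1 := binPoly_degree u
      have d2 := binPoly_degree v
      have hmul : ∀ p q : F[X], p.degree < (2*N : ℕ) → q.degree < N → (p*q).degree < (3*N : ℕ) := by
        intro p q hp hq
        by_cases hp0 : p = 0
        · simp only [hp0, zero_mul, degree_zero]; exact WithBot.bot_lt_coe _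
        by_cases hq0 : q = 0
        · simp only [hq0, mul_zero, degree_zero]; exact WithBot.bot_lt_coe _
        rw [degree_mul, degree_eq_natDegree hp0, degree_eq_natDegree hq0]
        rw [degree_eq_natDegree hp0] at hp
        rw [degree_eq_natDegree hq0] at hq
        norm_cast at *
        omega
      refine lt_of_le_of_lt (degree_sub_le _ _) (max_lt ?_ ?_)
      · exact hmul _ _ (by rwa [degree_taylor]) d2
      · rw [← mul_assoc, ← smul_eq_C_mul]
        exact hmul _ _ (lt_of_le_of_lt (degree_smul_le _ _) d1) (by rwa [degree_taylor])
  have hv0 : binPoly v = 0 := by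
    rcases shift_identity hβ hid with h | h
    · apply degree_zero_of_roots (binPoly_degree v) B (by omega)
      intro b hb
      have := key b hb
      rw [h, eval_zero, zero_add] at this
      exact (mul_eq_zero.1 this).resolve_left (hg b hb)
    · exact h
  have hu0 : binPoly u = 0 := by
    apply degree_zero_of_roots (binPoly_degree u) B (by omega)
    intro b hb
    have := key b hb
    rwa [hv0, eval_zero, mul_zero, add_zero] at this
  rintro (i | i)
  · exact congrFun (binPoly_eq_zero u hu0) i
  · exact congrFun (binPoly_eq_zero v hv0) i
end


theorem pow_dvd_one_add_pow_sub {A : Type*} [CommRing A] (y : A) (N b : ℕ) :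
    y ^ N ∣ (1 + y) ^ b - ∑ i ∈ Finset.range N, y ^ i * (b.choose i : A) := by
  have h1 : (1 + y) ^ b = ∑ i ∈ Finset.range (N + (b+1)), y ^ i * (b.choose i : A) := by
    rw [add_comm 1 y, add_pow]
    simp only [one_pow, mul_one]
    apply Finset.sum_subset
    · intro i hi; simp only [Finset.mem_range] at *; omega
    · intro i _ hi
      simp only [Finset.mem_range, not_lt] at hi
      rw [Nat.choose_eq_zero_of_lt (by omega)]; simp
  rw [h1, Finset.sum_range_add, add_sub_cancel_left]
  apply Finset.dvd_sum
  intro i _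
  rw [pow_add, mul_assoc]
  exact dvd_mul_right _ _

theorem row_rep {p : ℕ} [Fact p.Prime] {K m N : ℕ} (g : ℕ → ℤ) (Den β : ℤ_[p]) (B : Finset ℕ)
    (hKN : m ≤ K * N) (hβK : (p : ℤ_[p]) ^ K ∣ β - 1)
    (hcong : ∀ b ∈ B, (p : ℤ_[p]) ^ m ∣ (g b : ℤ_[p]) - Den * β ^ b) (j : Fin N) :
    ∃ cm : Fin (2*N) → ℤ_[p], ∀ b ∈ B,
      (p : ℤ_[p]) ^ m ∣ (g b : ℤ_[p]) * (b.choose j : ℤ_[p]) - ∑ k, cm k * (b.choose k : ℤ_[p]) := by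
  set W : Submodule ℤ_[p] (ℕ → ℤ_[p]) :=
    Submodule.span ℤ_[p] (Set.range (fun (k : Fin (2*N)) (b : ℕ) => (b.choose k : ℤ_[p]))) with hW
  have hbase : ∀ k, k < 2 * N → (fun b : ℕ => (b.choose k : ℤ_[p])) ∈ W := by
    intro k hk
    exact Submodule.subset_span ⟨⟨k, hk⟩, rfl⟩
  set y := β - 1 with hy
  have hφ : (∑ i ∈ Finset.range N, ∑ k ∈ Finset.range ((j:ℕ)+1),
      (Den * y ^ i * ((i.choose (j-k) * (i+k).choose i : ℕ) : ℤ_[p])) •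
        (fun b : ℕ => (b.choose (i+k) : ℤ_[p]))) ∈ W := by
    apply Submodule.sum_mem
    intro i hi
    apply Submodule.sum_mem
    intro k hk
    apply Submodule.smul_mem
    apply hbase
    simp only [Finset.mem_range] at hi hk
    omega
  obtain ⟨cm, hcm⟩ := (Submodule.mem_span_range_iff_exists_fun _).1 hφ
  refine ⟨cm, fun b hb => ?_⟩
  have h1 := congrFun hcm b
  simp only [Finset.sum_apply, Pi.smul_apply, smul_eq_mul] at h1
  rw [h1]
  have h2 : ∑ i ∈ Finset.range N, ∑ k ∈ Finset.range ((j:ℕ)+1),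
      (Den * y ^ i * ((i.choose (j-k) * (i+k).choose i : ℕ) : ℤ_[p])) * (b.choose (i+k) : ℤ_[p])
      = Den * (b.choose j : ℤ_[p]) * ∑ i ∈ Finset.range N, y ^ i * (b.choose i : ℤ_[p]) := by
    rw [Finset.mul_sum]
    apply Finset.sum_congr rfl
    intro i _
    have := choose_mul_choose_expand b i j
    have h3 : (b.choose i : ℤ_[p]) * (b.choose j : ℤ_[p]) = ∑ k ∈ Finset.range ((j:ℕ)+1),
      ((i.choose (j-k) * (i+k).choose i : ℕ) : ℤ_[p]) * (b.choose (i+k) : ℤ_[p]) := by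
      exact_mod_cast congrArg (Nat.cast : ℕ → ℤ_[p]) this
    calc _ = Den * y ^ i * ∑ k ∈ Finset.range ((j:ℕ)+1),
      ((i.choose (j-k) * (i+k).choose i : ℕ) : ℤ_[p]) * (b.choose (i+k) : ℤ_[p]) := by
          rw [Finset.mul_sum]; apply Finset.sum_congr rfl; intro k _; ring
      _ = _ := by rw [← h3]; ring
  rw [h2]
  have h4 : (p : ℤ_[p]) ^ m ∣ y ^ N := by
    refine (pow_dvd_pow _ hKN).trans ?_
    rw [pow_mul]
    exact pow_dvd_pow_of_dvd hβK N
  have h5 := h4.trans (pow_dvd_one_add_pow_sub y N b)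
  have h6 : (1 + y) = β := by rw [hy]; ring
  rw [h6] at h5
  have := dvd_add ((hcong b hb).mul_right (b.choose j : ℤ_[p])) (h5.mul_left (Den * (b.choose j : ℤ_[p])))
  convert this using 1
  ring

open Matrix in
theorem det_bound {p : ℕ} [Fact p.Prime] {K m N X : ℕ} (g : ℕ → ℤ) (G : ℕ) (Den β : ℤ_[p])
    (B good : Finset ℕ) (hN : 0 < N) (hKN : m ≤ K * N) (hBX : ∀ b ∈ B, b < X)
    (hgB : good ⊆ B) (hgood : ∀ b ∈ good, b + 1 ∈ B ∧ (g (b+1) : ℤ_[p]) = β * (g b : ℤ_[p]))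
    (hcard : 3 * N ≤ good.card) (hβ1 : β ≠ 1) (hβK : (p : ℤ_[p]) ^ K ∣ β - 1)
    (hg : ∀ b ∈ B, g b ≠ 0) (hG : ∀ b ∈ B, |g b| ≤ G) (hG1 : 1 ≤ G)
    (hcong : ∀ b ∈ B, (p : ℤ_[p]) ^ m ∣ (g b : ℤ_[p]) - Den * β ^ b) :
    p ^ m ≤ 64 ^ X * G ^ 3 := by
  classical
  have li := indep (F := ℚ_[p]) hN B good (fun b => (g b : ℚ_[p])) (β : ℚ_[p])
    (by intro h; apply hβ1; exact Subtype.ext (by simpa using h)) hgB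
    (by
      intro b hb
      refine ⟨(hgood b hb).1, ?_⟩
      have := congrArg (fun t : ℤ_[p] => (t : ℚ_[p])) (hgood b hb).2
      simpa using this) hcard
    (by intro b hb; exact_mod_cast hg b hb)
  obtain ⟨e, he⟩ := exists_det_ne_zero _ li
  set A : Matrix (Fin (2*N) ⊕ Fin N) (Fin (2*N) ⊕ Fin N) ℤ := Matrix.of (fun i j =>
    Sum.elim (fun i : Fin (2*N) => (((e j : ℕ).choose i : ℕ) : ℤ))
      (fun i : Fin N => g (e j) * (((e j : ℕ).choose i : ℕ) : ℤ)) i) with hA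
  have hdet : A.det ≠ 0 := by
    intro h0
    apply he
    have h1 := Int.cast_det (R := ℚ_[p]) A
    rw [h0, Int.cast_zero] at h1
    rw [h1]
    congr 1
    ext i j
    rcases i with i | i <;> simp [hA]
  choose cm hcm using fun j => row_rep (K := K) (m := m) g Den β B hKN hβK hcong j
  choose! R hR using hcm
  have hdvd : (p : ℤ_[p]) ^ (m * N) ∣ ((A.det : ℤ) : ℤ_[p]) := by
    rw [Int.cast_det (R := ℤ_[p]) A]
    set First : Matrix (Fin (2*N)) (Fin (2*N) ⊕ Fin N) ℤ_[p] :=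
      Matrix.of (fun i j => ((e j : ℕ).choose i : ℤ_[p])) with hF
    set Rr : Matrix (Fin N) (Fin (2*N) ⊕ Fin N) ℤ_[p] := Matrix.of (fun i j => R i (e j)) with hRr
    have hfac : A.map (fun x : ℤ => (x : ℤ_[p])) =
        Matrix.fromBlocks (1 : Matrix (Fin (2*N)) (Fin (2*N)) ℤ_[p]) 0 (Matrix.of cm)
          ((p : ℤ_[p]) ^ m • (1 : Matrix (Fin N) (Fin N) ℤ_[p])) * Matrix.fromRows First Rr := by
      rw [Matrix.fromBlocks_mul_fromRows]
      ext i j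
      rcases i with i | i
      · simp [hA, hF]
      · have h1 := hR i (e j) (e j).2
        simp only [Matrix.map_apply, hA, Matrix.of_apply, Sum.elim_inr, Matrix.fromRows_apply_inr,
          Matrix.add_apply, Matrix.mul_apply, smul_mul, Matrix.one_mul, Matrix.smul_apply, hRr, smul_eq_mul, hF]
        push_cast
        linear_combination h1
    rw [hfac, Matrix.det_mul, Matrix.det_fromBlocks_zero₁₂, Matrix.det_smul, Matrix.det_one, Matrix.det_one,
      Fintype.card_fin, ← pow_mul, one_mul, mul_one]
    exact dvd_mul_right _ _
  have hdvd2 := (PadicInt.pow_p_dvd_int_iff _ _).1 hdvd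
  have hle1 : (p : ℤ) ^ (m * N) ≤ |A.det| := by
    apply Int.le_of_dvd (abs_pos.2 hdet)
    rwa [dvd_abs]
  have hX : 3 * N ≤ X := by
    refine hcard.trans ?_
    calc good.card ≤ (Finset.range X).card := Finset.card_le_card (fun b hb => Finset.mem_range.2 (hBX b (hgB hb)))
      _ = X := Finset.card_range X
  have hle2 : |A.det| ≤ (Nat.factorial (3*N) : ℤ) * ((2 ^ X * G : ℕ) : ℤ) ^ (3*N) := by
    have := Matrix.det_le (A := A) (abv := AbsoluteValue.abs) (x := ((2 ^ X * G : ℕ) : ℤ)) (by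
      intro i j
      have hb := (e j).2
      have hbX := hBX _ hb
      have hch : ∀ i : ℕ, (((e j : ℕ).choose i : ℕ) : ℤ) ≤ 2 ^ X := by
        intro i
        have : (e j : ℕ).choose i ≤ 2 ^ X :=
          (Nat.choose_le_two_pow _ _).trans (Nat.pow_le_pow_right (by norm_num) hbX.le)
        exact_mod_cast this
      have hG1' : (1 : ℤ) ≤ G := by exact_mod_cast hG1
      rcases i with i | i
      · simp only [hA, Matrix.of_apply, Sum.elim_inl, AbsoluteValue.abs_apply, Nat.abs_cast]
        push_cast
        nlinarith [hch i, pow_pos (show (0:ℤ) < 2 by norm_num) X]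
      · simp only [hA, Matrix.of_apply, Sum.elim_inr, AbsoluteValue.abs_apply, abs_mul, Nat.abs_cast]
        push_cast
        rw [mul_comm]
        exact mul_le_mul (hch i) (hG _ hb) (abs_nonneg _) (by positivity))
    have hc : Fintype.card (Fin (2*N) ⊕ Fin N) = 3 * N := by simp; ring
    rw [hc, nsmul_eq_mul] at this
    exact this
  have hle3 : p ^ (m * N) ≤ Nat.factorial (3*N) * (2 ^ X * G) ^ (3*N) := by
    have := hle1.trans hle2
    exact_mod_cast this
  have hle4 : (p ^ m) ^ N ≤ (64 ^ X * G ^ 3) ^ N := by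
    rw [← pow_mul]
    refine hle3.trans ?_
    calc Nat.factorial (3*N) * (2 ^ X * G) ^ (3*N) ≤ (3*N)^(3*N) * (2 ^ X * G) ^ (3*N) := by
          gcongr; exact Nat.factorial_le_pow _
      _ ≤ (2^X)^(3*N) * (2 ^ X * G) ^ (3*N) := by
          gcongr; exact hX.trans Nat.lt_two_pow_self.le
      _ = ((2^X * (2^X * G))^3)^N := by rw [← mul_pow, pow_mul]
      _ = _ := by
        congr 1
        have : (64:ℕ)^X = (2^X)^6 := by rw [← pow_mul, mul_comm, pow_mul]; norm_num
        rw [this]; ring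
  exact (Nat.pow_le_pow_iff_left hN.ne').1 hle4


theorem dirichlet_simul (S : Finset ℕ) (α : ℕ → ℤ) (n R : ℕ) (hn : 0 < n) (hR : 0 < R) :
    ∃ q : ℕ, 1 ≤ q ∧ q ≤ R ^ S.card ∧ ∃ f : ℕ → ℤ, ∀ l ∈ S, |(q:ℤ) * α l - n * f l| * R ≤ n := by
  classical
  have hn' : (0:ℤ) < n := by exact_mod_cast hn
  let φ : ℕ → (S → Fin R) := fun q l => ⟨(((q:ℤ) * α l % n) * R / n).toNat, by
    have h1 : 0 ≤ ((q:ℤ) * α l % n) := Int.emod_nonneg _ hn'.ne'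
    have h2 : ((q:ℤ) * α l % n) < n := Int.emod_lt_of_pos _ hn'
    have h3 : (((q:ℤ) * α l % n) * R / n) < R := by
      apply Int.ediv_lt_of_lt_mul hn'
      nlinarith
    omega⟩
  obtain ⟨a, ha, b, hb, hab, he⟩ := Finset.exists_ne_map_eq_of_card_lt_of_maps_to
    (s := Finset.range (R ^ S.card + 1)) (t := (Finset.univ : Finset (S → Fin R))) (f := φ)
    (by simp) (by intro x _; simp)
  wlog hlt : a < b generalizing a b
  · exact this b hb a ha hab.symm he.symm (by omega)
  simp only [Finset.mem_range] at ha hb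
  refine ⟨b - a, by omega, by omega, fun l => ((b:ℤ) * α l / n) - ((a:ℤ) * α l / n), ?_⟩
  intro l hl
  have h := congrArg Fin.val (congrFun he ⟨l, hl⟩)
  simp only [φ] at h
  have e1 := Int.emod_add_mul_ediv ((a:ℤ) * α l) n
  have e2 := Int.emod_add_mul_ediv ((b:ℤ) * α l) n
  set m1 := ((a:ℤ) * α l) % n
  set m2 := ((b:ℤ) * α l) % n
  have p1 : 0 ≤ m1 := Int.emod_nonneg _ hn'.ne'
  have p2 : 0 ≤ m2 := Int.emod_nonneg _ hn'.ne'
  have q1 : 0 ≤ m1 * R / n := by positivity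
  have q2 : 0 ≤ m2 * R / n := by positivity
  have hq : m1 * R / n = m2 * R / n := by omega
  have d1 := Int.emod_add_mul_ediv (m1 * R) n
  have d2 := Int.emod_add_mul_ediv (m2 * R) n
  have r1 := Int.emod_nonneg (m1 * R) hn'.ne'
  have r2 := Int.emod_nonneg (m2 * R) hn'.ne'
  have s1 := Int.emod_lt_of_pos (m1 * R) hn'
  have s2 := Int.emod_lt_of_pos (m2 * R) hn'
  rw [hq] at d1
  have hkey : (((b - a : ℕ) : ℤ) * α l - n * (((b:ℤ) * α l / n) - ((a:ℤ) * α l / n))) = m2 - m1 := by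
    rw [Nat.cast_sub hlt.le]
    linear_combination e1 - e2
  rw [hkey]
  have : |m2 - m1| * (R:ℤ) = |(m2 - m1) * R| := by rw [abs_mul, Nat.abs_cast]
  rw [this, abs_le]
  constructor <;> nlinarith

set_option maxHeartbeats 1000000 in
theorem count_good (n Q T X : ℕ) (hQ : 0 < Q) (hTn : T < n) (hQT : 4 * Q ≤ T) (hX : n ≤ X * Q) :
    X * T ≤ 4 * n * ((Finset.range X).filter (fun b => b + 1 < X ∧ Q * b % n + Q ≤ T)).card := by
  set A := X * Q / n with hA
  set J := T / Q - 1 with hJ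
  have hn : 0 < n := by omega
  have hTQ : 4 ≤ T / Q := (Nat.le_div_iff_mul_le hQ).2 hQT
  have hA1 : 1 ≤ A := (Nat.le_div_iff_mul_le hn).2 (by omega)
  have hAn : A * n ≤ X * Q := Nat.div_mul_le_self _ _
  have hJQ : (J + 1) * Q ≤ T := by
    have : J + 1 = T / Q := by omega
    rw [this]; exact Nat.div_mul_le_self _ _
  have hcard : A * J ≤ ((Finset.range X).filter (fun b => b + 1 < X ∧ Q * b % n + Q ≤ T)).card := by
    have h0 : (Finset.range A ×ˢ Finset.range J).card = A * J := by simp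
    rw [← h0]
    have hb : ∀ a, a * n ≤ Q * ((a * n + Q - 1) / Q) ∧ Q * ((a * n + Q - 1) / Q) < a * n + Q := by
      intro a
      have h1 := Nat.div_add_mod (a * n + Q - 1) Q
      have h2 := Nat.mod_lt (a * n + Q - 1) hQ
      omega
    have hrange : ∀ a j, j < J → a * n ≤ Q * ((a * n + Q - 1) / Q + j) ∧
        Q * ((a * n + Q - 1) / Q + j) + Q < a * n + T + 1 := by
      intro a j hj
      obtain ⟨h1, h2⟩ := hb a
      have h3 : (j + 2) * Q ≤ T := le_trans (Nat.mul_le_mul_right Q (by omega)) hJQ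
      constructor <;> nlinarith
    apply Finset.card_le_card_of_injOn (fun x => (x.1 * n + Q - 1) / Q + x.2)
    · rintro ⟨a, j⟩ hx
      simp only [Finset.coe_product, Finset.coe_range, Set.mem_prod, Set.mem_Iio] at hx
      obtain ⟨h1, h2⟩ := hrange a j hx.2
      set b := (a * n + Q - 1) / Q + j
      have h3 : (a + 1) * n ≤ X * Q := le_trans (Nat.mul_le_mul_right n hx.1) hAn
      have hbX : b + 1 < X := by
        by_contra hc
        have : X * Q ≤ (b + 1) * Q := Nat.mul_le_mul_right Q (by omega)
        nlinarith
      have hmod : Q * b % n = Q * b - a * n := by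
        have : Q * b = (Q * b - a * n) + a * n := by omega
        rw [this, Nat.add_mul_mod_self_right, Nat.mod_eq_of_lt (by omega)]
        omega
      simp only [Finset.coe_filter, Finset.mem_range, Set.mem_setOf_eq]
      refine ⟨by omega, hbX, ?_⟩
      rw [hmod]; omega
    · rintro ⟨a, j⟩ hx ⟨a', j'⟩ hx' he
      simp only [Finset.coe_product, Finset.coe_range, Set.mem_prod, Set.mem_Iio] at hx hx'
      simp only at he
      obtain ⟨h1, h2⟩ := hrange a j hx.2
      obtain ⟨h1', h2'⟩ := hrange a' j' hx'.2
      rw [he] at h1 h2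
      have haa : a = a' := by
        rcases lt_trichotomy a a' with h | h | h
        · have : (a + 1) * n ≤ a' * n := Nat.mul_le_mul_right n h
          nlinarith
        · exact h
        · have : (a' + 1) * n ≤ a * n := Nat.mul_le_mul_right n h
          nlinarith
      subst haa
      simp only [Prod.mk.injEq, true_and]
      omega
  have h1 : X * Q < (A + 1) * n := by
    have := Nat.div_add_mod (X * Q) n
    have h2 := Nat.mod_lt (X * Q) hn
    rw [← hA] at this
    have h3 : (A + 1) * n = n * A + n := by ring
    omega
  have h2 : T < (J + 2) * Q := by
    have := Nat.div_add_mod T Q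
    have h3 := Nat.mod_lt T hQ
    have h4 : J + 1 = T / Q := by omega
    rw [← h4] at this
    have h5 : (J + 2) * Q = Q * (J + 1) + Q := by ring
    omega
  have h3 : X * Q ≤ 2 * A * n := by
    have h5 : (A + 1) * n ≤ (2 * A) * n := Nat.mul_le_mul_right n (by omega)
    omega
  have h4 : T ≤ 2 * J * Q := by
    have h5 : (J + 2) * Q ≤ (2 * J) * Q := Nat.mul_le_mul_right Q (by omega)
    omega
  have h5 : (X * Q) * T ≤ (2 * A * n) * (2 * J * Q) := Nat.mul_le_mul h3 h4
  have h6 : X * T ≤ 4 * n * (A * J) := by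
    apply Nat.le_of_mul_le_mul_right _ hQ
    calc X * T * Q = (X * Q) * T := by ring
      _ ≤ _ := h5
      _ = _ := by ring
  exact h6.trans (Nat.mul_le_mul_left _ hcard)

theorem group_identity {M : Type*} [CommGroup M] (S : Finset ℕ) (u : ℕ → M) (zz sg : M) (hsg : sg ^ 2 = 1)
    (α F E : ℕ → ℤ) (Q n a ρ b : ℕ) (h : Q * b = n * a + ρ) :
    sg ^ a * zz ^ ρ * ∏ l ∈ S, u l ^ (E l + (F l * b - α l * a)) =
      (∏ l ∈ S, u l ^ (E l)) * (zz ^ Q * ∏ l ∈ S, u l ^ (F l)) ^ b *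
        ((sg * zz ^ n * ∏ l ∈ S, u l ^ (α l)) ^ a)⁻¹ := by
  rw [eq_mul_inv_iff_mul_eq]
  have h1 : sg ^ a * sg ^ a = 1 := by rw [← mul_pow, ← sq, hsg, one_pow]
  have h2 : (zz ^ Q) ^ b = zz ^ ρ * (zz ^ n) ^ a := by
    rw [← pow_mul, ← pow_mul, ← pow_add, h, add_comm]
  have h3 : (∏ l ∈ S, u l ^ (E l + (F l * b - α l * a))) * (∏ l ∈ S, u l ^ (α l)) ^ a =
      (∏ l ∈ S, u l ^ (E l)) * (∏ l ∈ S, u l ^ (F l)) ^ b := by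
    rw [← Finset.prod_pow, ← Finset.prod_pow, ← Finset.prod_mul_distrib, ← Finset.prod_mul_distrib]
    apply Finset.prod_congr rfl
    intro l _
    rw [← zpow_natCast, ← zpow_natCast, ← zpow_mul, ← zpow_mul, ← zpow_add, ← zpow_add]
    congr 1
    ring
  rw [mul_pow, mul_pow, mul_pow, h2]
  calc _ = (sg ^ a * sg ^ a) * (zz ^ ρ * (zz ^ n) ^ a) * ((∏ l ∈ S, u l ^ (E l + (F l * b - α l * a))) * (∏ l ∈ S, u l ^ (α l)) ^ a) := by
        simp only [mul_assoc, mul_left_comm, mul_comm]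
    _ = _ := by
      rw [h1, h3, one_mul]
      simp only [mul_assoc, mul_left_comm, mul_comm]

theorem padic_isUnit {p : ℕ} [Fact p.Prime] {k : ℤ} (h : ¬ (p:ℤ) ∣ k) : IsUnit (k : ℤ_[p]) := by
  rw [PadicInt.isUnit_iff]
  refine le_antisymm (PadicInt.norm_le_one _) ?_
  by_contra hc
  exact h ((PadicInt.norm_int_lt_one_iff_dvd k).1 (not_le.1 hc))

theorem padic_totient {p : ℕ} [Fact p.Prime] (K : ℕ) (t : ℤ_[p]ˣ) :
    (p : ℤ_[p]) ^ K ∣ ((t ^ (Nat.totient (p ^ K)) : ℤ_[p]ˣ) : ℤ_[p]) - 1 := by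
  rw [← Ideal.mem_span_singleton, ← PadicInt.ker_toZModPow, RingHom.mem_ker, map_sub, map_one, sub_eq_zero]
  have := ZMod.pow_totient (Units.map (PadicInt.toZModPow (p := p) K).toMonoidHom t)
  have h2 := congrArg Units.val this
  rw [Units.val_pow_eq_pow_val] at h2 ⊢
  rw [map_pow]
  exact h2



theorem exists_unit_family (p : ℕ) [Fact p.Prime] :
    ∃ U : ℕ → ℤ_[p]ˣ, ∀ l : ℕ, ¬ p ∣ l → ((U l : ℤ_[p]ˣ) : ℤ_[p]) = ((l : ℤ) : ℤ_[p]) := by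
  classical
  refine ⟨fun l => if h : ¬ p ∣ l then
    (padic_isUnit (p := p) (k := (l : ℤ)) (by exact_mod_cast h)).unit else 1, ?_⟩
  intro l hl
  simp only [hl, not_false_eq_true, dif_pos]
  rfl

theorem lambda_mul {M : Type*} [CommGroup M] (S : Finset ℕ) (U : ℕ → M) (u v : ℕ → ℕ) :
    (∏ l ∈ S, U l ^ ((u l : ℤ) - v l)) * ∏ l ∈ S, U l ^ (v l) = ∏ l ∈ S, U l ^ (u l) := by
  rw [← Finset.prod_mul_distrib]
  apply Finset.prod_congr rfl
  intro l _
  rw [← zpow_natCast, ← zpow_add, ← zpow_natCast]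
  congr 1
  ring

theorem prod_cast {p : ℕ} [Fact p.Prime] (S : Finset ℕ) (U : ℕ → ℤ_[p]ˣ)
    (hU : ∀ l ∈ S, ((U l : ℤ_[p]ˣ) : ℤ_[p]) = ((l : ℤ) : ℤ_[p])) (u : ℕ → ℕ) :
    ((∏ l ∈ S, U l ^ (u l) : ℤ_[p]ˣ) : ℤ_[p]) = ((∏ l ∈ S, (l : ℤ) ^ (u l) : ℤ) : ℤ_[p]) := by
  rw [Units.coe_prod, Int.cast_prod]
  apply Finset.prod_congr rfl
  intro l hl
  rw [Units.val_pow_eq_pow_val, hU l hl, Int.cast_pow]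

theorem lambda_cong {p : ℕ} [Fact p.Prime] (S : Finset ℕ) (U : ℕ → ℤ_[p]ˣ)
    (hU : ∀ l ∈ S, ((U l : ℤ_[p]ˣ) : ℤ_[p]) = ((l : ℤ) : ℤ_[p])) (u v : ℕ → ℕ)
    (sg zz : ℤ_[p]ˣ) (σ z : ℤ) (hsg : (sg : ℤ_[p]) = (σ : ℤ_[p])) (hzz : (zz : ℤ_[p]) = (z : ℤ_[p]))
    (n m : ℕ) (hdvd : ((p ^ m : ℕ) : ℤ) ∣ σ * z ^ n * ∏ l ∈ S, (l : ℤ) ^ (u l) - ∏ l ∈ S, (l : ℤ) ^ (v l)) :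
    (p : ℤ_[p]) ^ m ∣ ((sg * zz ^ n * ∏ l ∈ S, U l ^ ((u l : ℤ) - v l) : ℤ_[p]ˣ) : ℤ_[p]) - 1 := by
  have h1 : (sg * zz ^ n * ∏ l ∈ S, U l ^ ((u l : ℤ) - v l)) * ∏ l ∈ S, U l ^ (v l) =
      sg * zz ^ n * ∏ l ∈ S, U l ^ (u l) := by rw [mul_assoc, lambda_mul]
  set Λ := (sg * zz ^ n * ∏ l ∈ S, U l ^ ((u l : ℤ) - v l)) with hΛ
  clear_value Λ
  have h2 := congrArg Units.val h1
  rw [Units.val_mul, Units.val_mul, Units.val_mul, prod_cast S U hU, prod_cast S U hU,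
    Units.val_pow_eq_pow_val, hsg, hzz] at h2
  have h3 : (p : ℤ_[p]) ^ m ∣ ((σ * z ^ n * ∏ l ∈ S, (l : ℤ) ^ (u l) - ∏ l ∈ S, (l : ℤ) ^ (v l) : ℤ) : ℤ_[p]) := by
    rw [PadicInt.pow_p_dvd_int_iff]
    exact_mod_cast hdvd
  have h4 : ((σ * z ^ n * ∏ l ∈ S, (l : ℤ) ^ (u l) - ∏ l ∈ S, (l : ℤ) ^ (v l) : ℤ) : ℤ_[p]) =
      ((Λ : ℤ_[p]) - 1) * ((∏ l ∈ S, U l ^ (v l) : ℤ_[p]ˣ) : ℤ_[p]) := by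
    rw [prod_cast S U hU]
    push_cast at h2 ⊢
    rw [sub_mul, h2, one_mul]
  rw [h4] at h3
  exact (Units.dvd_mul_right).1 h3

theorem beta_ne_one {p : ℕ} [Fact p.Prime] (S : Finset ℕ) (hS : ∀ l ∈ S, 0 < l) (U : ℕ → ℤ_[p]ˣ)
    (hU : ∀ l ∈ S, ((U l : ℤ_[p]ˣ) : ℤ_[p]) = ((l : ℤ) : ℤ_[p])) (u v : ℕ → ℕ)
    (sg zz : ℤ_[p]ˣ) (σ z : ℤ) (hsg : (sg : ℤ_[p]) = (σ : ℤ_[p])) (hzz : (zz : ℤ_[p]) = (z : ℤ_[p]))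
    (hσ : |σ| = 1)
    (n m Q R : ℕ) (hQ : 0 < Q) (hR : 0 < R)
    (hdvd : (p : ℤ_[p]) ^ m ∣ ((sg * zz ^ n * ∏ l ∈ S, U l ^ ((u l : ℤ) - v l) : ℤ_[p]ˣ) : ℤ_[p]) - 1)
    (F : ℕ → ℤ) (hF : ∀ l ∈ S, |(Q : ℤ) * ((u l : ℤ) - v l) - n * F l| * R ≤ n)
    (hsmall : 2 * (∏ l ∈ S, l) ^ (n / R) < p ^ m)
    (hne : |z| ^ n * ∏ l ∈ S, (l : ℤ) ^ (u l) ≠ ∏ l ∈ S, (l : ℤ) ^ (v l)) :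
    zz ^ Q * ∏ l ∈ S, U l ^ (F l) ≠ 1 := by
  intro hβ
  set Λ := (sg * zz ^ n * ∏ l ∈ S, U l ^ ((u l : ℤ) - v l)) with hΛ
  set d : ℕ → ℤ := fun l => (Q : ℤ) * ((u l : ℤ) - v l) - n * F l with hd
  have h1 : Λ ^ Q = sg ^ Q * ∏ l ∈ S, U l ^ (((d l).toNat : ℤ) - ((-d l).toNat : ℕ)) := by
    have e1 : ∏ l ∈ S, U l ^ (((d l).toNat : ℤ) - ((-d l).toNat : ℕ)) =
        (∏ l ∈ S, U l ^ ((u l : ℤ) - v l)) ^ Q * ((∏ l ∈ S, U l ^ (F l)) ^ n)⁻¹ := by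
      rw [← Finset.prod_pow, ← Finset.prod_pow, ← Finset.prod_inv_distrib, ← Finset.prod_mul_distrib]
      apply Finset.prod_congr rfl
      intro l _
      rw [← zpow_natCast, ← zpow_natCast, ← zpow_mul, ← zpow_mul, ← zpow_neg, ← zpow_add]
      congr 1
      have : ((d l).toNat : ℤ) - ((-d l).toNat : ℕ) = d l := by omega
      rw [this, hd]; ring
    have e2 : (∏ l ∈ S, U l ^ (F l)) = (zz ^ Q)⁻¹ := by
      rw [eq_inv_iff_mul_eq_one, mul_comm]; exact hβ
    rw [e1, e2, hΛ, mul_pow, mul_pow, inv_pow, inv_inv, ← pow_mul, ← pow_mul, mul_comm Q n]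
    simp only [mul_assoc, mul_comm]
  have h2 : Λ ^ Q * ∏ l ∈ S, U l ^ ((-d l).toNat) = sg ^ Q * ∏ l ∈ S, U l ^ ((d l).toNat) := by
    rw [h1, mul_assoc, lambda_mul]
  have h3 : (p : ℤ_[p]) ^ m ∣ ((Λ ^ Q : ℤ_[p]ˣ) : ℤ_[p]) - 1 := by
    rw [Units.val_pow_eq_pow_val]
    refine hdvd.trans ?_
    have := sub_dvd_pow_sub_pow (Λ : ℤ_[p]) 1 Q
    rwa [one_pow] at this
  have hb : ∀ e : ℕ → ℤ, (∀ l ∈ S, e l * R ≤ n) →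
      0 < ∏ l ∈ S, (l : ℤ) ^ (e l).toNat ∧ ∏ l ∈ S, (l : ℤ) ^ (e l).toNat ≤ (((∏ l ∈ S, l) ^ (n / R) : ℕ) : ℤ) := by
    intro e he
    constructor
    · apply Finset.prod_pos
      intro l hl
      have := hS l hl
      positivity
    · push_cast
      rw [← Finset.prod_pow]
      apply Finset.prod_le_prod
      · intro l hl; positivity
      · intro l hl
        have h1 : (1 : ℤ) ≤ l := by exact_mod_cast hS l hl
        apply pow_le_pow_right₀ h1
        rw [Nat.le_div_iff_mul_le hR]
        have := he l hl
        rcases le_total (e l) 0 with h | h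
        · simp [Int.toNat_of_nonpos h]
        · zify; rw [Int.toNat_of_nonneg h]; exact this
  obtain ⟨a1, a2⟩ := hb d (fun l hl => le_trans (mul_le_mul_of_nonneg_right (le_abs_self _) (by positivity)) (hF l hl))
  obtain ⟨b1, b2⟩ := hb (fun l => - d l) (fun l hl => le_trans (mul_le_mul_of_nonneg_right (neg_le_abs _) (by positivity)) (hF l hl))
  have hp := prod_cast S U hU (fun l => (d l).toNat)
  have hm := prod_cast S U hU (fun l => (-d l).toNat)
  set A : ℤ := ∏ l ∈ S, (l : ℤ) ^ (d l).toNat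
  set B : ℤ := ∏ l ∈ S, (l : ℤ) ^ (-d l).toNat
  have h4 : (p : ℤ_[p]) ^ m ∣ ((σ ^ Q * A - B : ℤ) : ℤ_[p]) := by
    have h5 := congrArg Units.val h2
    rw [Units.val_mul, Units.val_mul, hp, hm, Units.val_pow_eq_pow_val sg, hsg] at h5
    have : ((σ ^ Q * A - B : ℤ) : ℤ_[p]) = (((Λ ^ Q : ℤ_[p]ˣ) : ℤ_[p]) - 1) * (B : ℤ_[p]) := by
      push_cast at h5 ⊢
      rw [sub_mul, h5, one_mul]
    rw [this]
    exact h3.mul_right _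
  rw [PadicInt.pow_p_dvd_int_iff] at h4
  have h5 : σ ^ Q * A - B = 0 := by
    apply Int.eq_zero_of_abs_lt_dvd h4
    have hs : |σ ^ Q * A| = A := by rw [abs_mul, abs_pow, hσ, one_pow, one_mul, abs_of_pos a1]
    have : |σ ^ Q * A - B| ≤ |σ ^ Q * A| + |B| := abs_sub _ _
    rw [hs, abs_of_pos b1] at this
    have h6 : ((2 * (∏ l ∈ S, l) ^ (n / R) : ℕ) : ℤ) < ((p ^ m : ℕ) : ℤ) := by exact_mod_cast hsmall
    push_cast at h6 a2 b2
    linarith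
  have h6 : sg ^ Q * ∏ l ∈ S, U l ^ ((d l).toNat) = ∏ l ∈ S, U l ^ ((-d l).toNat) := by
    apply Units.ext
    rw [Units.val_mul, hp, hm, Units.val_pow_eq_pow_val, hsg]
    exact_mod_cast sub_eq_zero.1 h5
  rw [h6] at h2
  have h7 : Λ ^ Q = 1 := mul_eq_right.1 h2
  have h8 : (sg * zz ^ n * ∏ l ∈ S, U l ^ (u l)) ^ Q = (∏ l ∈ S, U l ^ (v l)) ^ Q := by
    rw [← lambda_mul S U u v, ← mul_assoc, mul_pow, h7, one_mul]
  have h9 := congrArg Units.val h8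
  rw [Units.val_pow_eq_pow_val, Units.val_pow_eq_pow_val, Units.val_mul, Units.val_mul,
    prod_cast S U hU, prod_cast S U hU, Units.val_pow_eq_pow_val, hsg, hzz] at h9
  have h10 : (σ * z ^ n * ∏ l ∈ S, (l : ℤ) ^ (u l)) ^ Q = (∏ l ∈ S, (l : ℤ) ^ (v l)) ^ Q := by
    exact_mod_cast h9
  have h11 := congrArg abs h10
  have c1 : 0 ≤ ∏ l ∈ S, (l : ℤ) ^ (u l) := by positivity
  have c2 : 0 ≤ ∏ l ∈ S, (l : ℤ) ^ (v l) := by positivity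
  rw [abs_pow, abs_pow, abs_mul, abs_mul, hσ, one_mul, abs_pow, abs_of_nonneg c1, abs_of_nonneg c2] at h11
  exact hne ((pow_left_inj₀ (by positivity) c2 hQ.ne').1 h11)


theorem k_bound (n c T Q a ρ b : ℕ) (α F : ℤ) (hn : 0 < n) (hc : 0 < c) (hT : T * c ≤ n)
    (hQ : Q * b = n * a + ρ) (hρ : ρ ≤ T) (hd : |(Q : ℤ) * α - n * F| ≤ n) :
    |F * b - α * a| ≤ b + (α.natAbs / c : ℕ) := by
  set k := F * b - α * a with hk
  set d := (Q : ℤ) * α - n * F with hdd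
  have h1 : (n : ℤ) * k = α * ρ - d * b := by
    have : (Q : ℤ) * b = n * a + ρ := by exact_mod_cast hQ
    rw [hk, hdd]
    linear_combination α * this
  have h2 : (n : ℤ) * |k| ≤ |α| * ρ + n * b := by
    have e1 : |(n : ℤ) * k| = n * |k| := by rw [abs_mul, Nat.abs_cast]
    have e2 : |d * (b : ℤ)| ≤ n * b := by
      rw [abs_mul, Nat.abs_cast]; exact mul_le_mul_of_nonneg_right hd (by positivity)
    have e3 : |α * (ρ : ℤ)| = |α| * ρ := by rw [abs_mul, Nat.abs_cast]
    rw [← e1, h1]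
    have := abs_sub (α * (ρ : ℤ)) (d * b)
    linarith
  have h3 : |α| * ρ * c ≤ |α| * n := by
    rw [mul_assoc]
    apply mul_le_mul_of_nonneg_left _ (abs_nonneg _)
    exact_mod_cast (Nat.mul_le_mul_right c hρ).trans hT
  have h4 : (|k| - b) * c ≤ |α| := by
    have hn' : (0 : ℤ) < n := by exact_mod_cast hn
    have hc' : (0 : ℤ) < c := by exact_mod_cast hc
    apply le_of_mul_le_mul_left _ hn'
    have := mul_le_mul_of_nonneg_right h2 hc'.le
    linarith
  have h5 : |k| - b ≤ |α| / c := (Int.le_ediv_iff_mul_le (by exact_mod_cast hc)).2 h4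
  have h6 : ((α.natAbs / c : ℕ) : ℤ) = |α| / c := by
    rw [Int.natCast_div, Int.natCast_natAbs]
  rw [h6]; linarith

theorem G_bound (S : Finset ℕ) (hS : ∀ l ∈ S, 0 < l) (u v : ℕ → ℕ) (z n c T X Y : ℕ) (hz : 0 < z)
    (hT : T * c ≤ n) (hY : 2 ≤ Y) (h1 : z ^ n * ∏ l ∈ S, l ^ u l ≤ 2 * Y) (h2 : ∏ l ∈ S, l ^ v l ≤ Y) :
    (z ^ T * ∏ l ∈ S, l ^ (2 * (X + ((u l : ℤ) - v l).natAbs / c))) ^ c ≤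
      Y ^ 8 * (∏ l ∈ S, l) ^ (2 * X * c) := by
  have hzn : 0 < z ^ n := by positivity
  have hu : 0 < ∏ l ∈ S, l ^ u l := Finset.prod_pos (fun l hl => pow_pos (hS l hl) _)
  have hv : 0 < ∏ l ∈ S, l ^ v l := Finset.prod_pos (fun l hl => pow_pos (hS l hl) _)
  have a1 : (z ^ T) ^ c ≤ 2 * Y := by
    rw [← pow_mul]
    calc z ^ (T * c) ≤ z ^ n := Nat.pow_le_pow_right hz hT
      _ ≤ z ^ n * ∏ l ∈ S, l ^ u l := Nat.le_mul_of_pos_right _ hu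
      _ ≤ _ := h1
  have a2 : ∏ l ∈ S, l ^ u l ≤ 2 * Y := le_trans (Nat.le_mul_of_pos_left _ hzn) h1
  have a3 : (∏ l ∈ S, l ^ (2 * (X + ((u l : ℤ) - v l).natAbs / c))) ^ c ≤
      (∏ l ∈ S, l) ^ (2 * X * c) * ((∏ l ∈ S, l ^ u l) * ∏ l ∈ S, l ^ v l) ^ 2 := by
    rw [← Finset.prod_mul_distrib, ← Finset.prod_pow, ← Finset.prod_pow, ← Finset.prod_pow, ← Finset.prod_mul_distrib]
    apply Finset.prod_le_prod'
    intro l hl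
    rw [← pow_mul, ← pow_add, ← pow_mul, ← pow_add]
    apply Nat.pow_le_pow_right (hS l hl)
    have e1 : ((u l : ℤ) - v l).natAbs / c * c ≤ ((u l : ℤ) - v l).natAbs := Nat.div_mul_le_self _ _
    have e2 : ((u l : ℤ) - v l).natAbs ≤ u l + v l := by omega
    have e3 : 2 * (X + ((u l : ℤ) - v l).natAbs / c) * c = 2 * X * c + 2 * (((u l : ℤ) - v l).natAbs / c * c) := by ring
    rw [e3]; omega
  rw [mul_pow]
  calc _ ≤ (2 * Y) * ((∏ l ∈ S, l) ^ (2 * X * c) * ((2 * Y) * Y) ^ 2) := by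
        apply Nat.mul_le_mul a1
        refine a3.trans ?_
        gcongr
    _ = (2 ^ 3 * Y ^ 5) * (∏ l ∈ S, l) ^ (2 * X * c) := by ring
    _ ≤ (Y ^ 3 * Y ^ 5) * (∏ l ∈ S, l) ^ (2 * X * c) := by gcongr
    _ = _ := by ring

set_option maxHeartbeats 1000000 in
theorem core_bound {p : ℕ} [Fact p.Prime] (S : Finset ℕ) (hS : ∀ l ∈ S, ¬ p ∣ l) (u v : ℕ → ℕ)
    (σ z : ℤ) (hσ : |σ| = 1) (hz : ¬ (p : ℤ) ∣ z) (n m K R c X N Y : ℕ)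
    (hdvd : ((p ^ m : ℕ) : ℤ) ∣ σ * z ^ n * ∏ l ∈ S, (l : ℤ) ^ (u l) - ∏ l ∈ S, (l : ℤ) ^ (v l))
    (hne : |z| ^ n * ∏ l ∈ S, (l : ℤ) ^ (u l) ≠ ∏ l ∈ S, (l : ℤ) ^ (v l))
    (hY : 2 ≤ Y) (hY1 : z.natAbs ^ n * ∏ l ∈ S, l ^ u l ≤ 2 * Y) (hY2 : ∏ l ∈ S, l ^ v l ≤ Y)
    (hc : 2 ≤ c) (hT : 4 * (Nat.totient (p ^ K) * (Nat.totient (p ^ K) * R) ^ S.card) ≤ n / c)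
    (hXn : n ≤ X * Nat.totient (p ^ K)) (hN : 0 < N) (hKN : m ≤ K * N) (hNX : 24 * c * N ≤ X)
    (hR : 0 < R) (hsmall : 2 * (∏ l ∈ S, l) ^ (n / R) < p ^ m) :
    (p ^ m) ^ c ≤ (64 * (∏ l ∈ S, l) ^ 6) ^ (X * c) * Y ^ 24 := by
  classical
  have hp : p.Prime := Fact.out
  set Φ := Nat.totient (p ^ K) with hΦ
  have hΦ0 : 0 < Φ := Nat.totient_pos.2 (pow_pos hp.pos K)
  have hSpos : ∀ l ∈ S, 0 < l := by
    intro l hl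
    rcases Nat.eq_zero_or_pos l with h | h
    · exact absurd (h ▸ dvd_zero p) (hS l hl)
    · exact h
  set T := n / c with hTdef
  have hT1 : 1 ≤ T := by
    have : 0 < Φ * (Φ * R) ^ S.card := by positivity
    omega
  have hTc : T * c ≤ n := Nat.div_mul_le_self _ _
  have hTn : T < n := by
    have : T * 2 ≤ T * c := Nat.mul_le_mul_left T hc
    omega
  have hn : 0 < n := by omega
  set α : ℕ → ℤ := fun l => (u l : ℤ) - v l with hα
  obtain ⟨q, hq1, hqR, f, hf⟩ := dirichlet_simul S α n (Φ * R) hn (by positivity)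
  set Q := Φ * q with hQdef
  set F : ℕ → ℤ := fun l => Φ * f l with hFdef
  have hQ0 : 0 < Q := by positivity
  have hQT : 4 * Q ≤ T := le_trans (Nat.mul_le_mul_left 4 (Nat.mul_le_mul_left Φ hqR)) hT
  have hF : ∀ l ∈ S, |(Q : ℤ) * α l - n * F l| * R ≤ n := by
    intro l hl
    have e : (Q : ℤ) * α l - n * F l = Φ * (q * α l - n * f l) := by
      rw [hQdef, hFdef]; push_cast; ring
    rw [e, abs_mul, Nat.abs_cast]
    have := hf l hl
    push_cast at this
    linarith
  have hF1 : ∀ l ∈ S, |(Q : ℤ) * α l - n * F l| ≤ n := by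
    intro l hl
    refine le_trans ?_ (hF l hl)
    exact le_mul_of_one_le_right (abs_nonneg _) (by exact_mod_cast hR)
  obtain ⟨U, hU'⟩ := exists_unit_family p
  have hU : ∀ l ∈ S, ((U l : ℤ_[p]ˣ) : ℤ_[p]) = ((l : ℤ) : ℤ_[p]) := fun l hl => hU' l (hS l hl)
  have hσu : ¬ (p : ℤ) ∣ σ := by
    intro h
    have := (Int.dvd_natAbs.2 h)
    rw [Int.natCast_natAbs, hσ] at this
    have h2 : p ∣ 1 := by exact_mod_cast this
    exact hp.one_lt.ne' (Nat.dvd_one.1 h2)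
  obtain ⟨zz, hzz⟩ := padic_isUnit hz
  obtain ⟨sg, hsg⟩ := padic_isUnit hσu
  have hσ2 : σ ^ 2 = 1 := by rw [← sq_abs, hσ, one_pow]
  have hsg2 : sg ^ 2 = 1 := by
    apply Units.ext
    rw [Units.val_pow_eq_pow_val, hsg, Units.val_one]
    exact_mod_cast congrArg (Int.cast : ℤ → ℤ_[p]) hσ2
  have hΛ := lambda_cong S U hU u v sg zz σ z hsg hzz n m hdvd
  have hβne := beta_ne_one S hSpos U hU u v sg zz σ z hsg hzz hσ n m Q R hQ0 hR hΛ F hF hsmall hne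
  set Λ : ℤ_[p]ˣ := (sg * zz ^ n * ∏ l ∈ S, U l ^ ((u l : ℤ) - v l)) with hΛdef
  set β : ℤ_[p]ˣ := zz ^ Q * ∏ l ∈ S, U l ^ (F l) with hβdef
  have hβK : (p : ℤ_[p]) ^ K ∣ (β : ℤ_[p]) - 1 := by
    have e : β = (zz ^ q * ∏ l ∈ S, U l ^ (f l)) ^ Φ := by
      rw [mul_pow, ← pow_mul, ← Finset.prod_pow, hβdef, hQdef, mul_comm Φ q]
      congr 1
      apply Finset.prod_congr rfl
      intro l _
      rw [← zpow_natCast, ← zpow_mul, hFdef, mul_comm]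
    rw [e]
    exact padic_totient K _
  set E : ℕ → ℕ := fun l => X + (α l).natAbs / c with hE
  set g : ℕ → ℤ := fun b => σ ^ (Q * b / n) * z ^ (Q * b % n) *
    ∏ l ∈ S, (l : ℤ) ^ ((E l : ℤ) + (F l * b - α l * (Q * b / n : ℕ))).toNat with hg
  set B := (Finset.range X).filter (fun b => Q * b % n ≤ T) with hB
  set good := (Finset.range X).filter (fun b => b + 1 < X ∧ Q * b % n + Q ≤ T) with hgood
  have hk : ∀ b ∈ B, ∀ l ∈ S, |F l * b - α l * (Q * b / n : ℕ)| ≤ E l := by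
    intro b hb l hl
    rw [hB, Finset.mem_filter, Finset.mem_range] at hb
    have := k_bound n c T Q (Q * b / n) (Q * b % n) b (α l) (F l) hn (by omega) hTc
      (Nat.div_add_mod _ _).symm hb.2 (hF1 l hl)
    refine this.trans ?_
    rw [hE]
    have : (b : ℤ) ≤ X := by exact_mod_cast hb.1.le
    push_cast
    push_cast at this
    linarith
  have hgval : ∀ b ∈ B, (g b : ℤ_[p]) =
      ((∏ l ∈ S, U l ^ (E l : ℤ) : ℤ_[p]ˣ) : ℤ_[p]) * (β : ℤ_[p]) ^ b * ((Λ ^ (Q * b / n))⁻¹ : ℤ_[p]ˣ) := by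
    intro b hb
    have hgi := group_identity S U zz sg hsg2 α F (fun l => (E l : ℤ)) Q n (Q * b / n) (Q * b % n) b
      (Nat.div_add_mod _ _).symm
    have h2 := congrArg Units.val hgi
    have h3 : ∏ l ∈ S, U l ^ ((E l : ℤ) + (F l * b - α l * (Q * b / n : ℕ))) =
        ∏ l ∈ S, U l ^ ((E l : ℤ) + (F l * b - α l * (Q * b / n : ℕ))).toNat := by
      apply Finset.prod_congr rfl
      intro l hl
      rw [← zpow_natCast]
      congr 1
      have := neg_le_of_abs_le (hk b hb l hl)
      rw [Int.toNat_of_nonneg (by linarith)]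
    rw [h3] at h2
    rw [Units.val_mul, Units.val_mul, prod_cast S U hU, Units.val_pow_eq_pow_val, Units.val_pow_eq_pow_val,
      hsg, hzz, Units.val_mul, Units.val_mul, Units.val_pow_eq_pow_val] at h2
    rw [← h2, hg]
    push_cast
    rfl
  have hzn : 1 ≤ z.natAbs := by
    rw [Nat.one_le_iff_ne_zero, Int.natAbs_ne_zero]
    rintro rfl
    exact hz (dvd_zero _)
  have hz0 : z ≠ 0 := by rintro rfl; exact hz (dvd_zero _)
  have hσ0 : σ ≠ 0 := by rintro rfl; simp at hσ
  set G : ℕ := z.natAbs ^ T * ∏ l ∈ S, l ^ (2 * E l) with hG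
  have hdet := det_bound (p := p) (K := K) (m := m) (N := N) (X := X) g G
    ((∏ l ∈ S, U l ^ (E l : ℤ) : ℤ_[p]ˣ) : ℤ_[p]) (β : ℤ_[p]) B good hN hKN
    (by intro b hb; rw [hB, Finset.mem_filter, Finset.mem_range] at hb; exact hb.1)
    (by
      intro b hb
      rw [hgood, Finset.mem_filter] at hb
      rw [hB, Finset.mem_filter]
      exact ⟨hb.1, by omega⟩)
    (by
      intro b hb
      rw [hgood, Finset.mem_filter, Finset.mem_range] at hb
      obtain ⟨hb0, hb1, hb2⟩ := hb
      have hlt : Q * b % n + Q < n := by omega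
      have e0 : Q * (b + 1) = n * (Q * b / n) + (Q * b % n + Q) := by
        have := Nat.div_add_mod (Q * b) n
        rw [mul_add, mul_one]; omega
      have e1 : Q * (b + 1) % n = Q * b % n + Q := by
        rw [e0, Nat.mul_add_mod, Nat.mod_eq_of_lt hlt]
      have e2 : Q * (b + 1) / n = Q * b / n := by
        rw [e0, Nat.mul_add_div hn, Nat.div_eq_of_lt hlt, add_zero]
      have m1 : b ∈ B := by
        rw [hB, Finset.mem_filter, Finset.mem_range]; exact ⟨hb0, by omega⟩
      have m2 : b + 1 ∈ B := by
        rw [hB, Finset.mem_filter, Finset.mem_range, e1]; exact ⟨hb1, hb2⟩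
      refine ⟨m2, ?_⟩
      rw [hgval _ m1, hgval _ m2, e2, pow_succ]
      ring)
    (by
      have h1 := count_good n Q T X hQ0 hTn hQT (hXn.trans (by
        apply Nat.mul_le_mul_left; exact Nat.le_mul_of_pos_right _ hq1))
      rw [← hgood] at h1
      have h2 : n ≤ 2 * c * T := by
        have e1 := Nat.div_add_mod n c
        have e2 := Nat.mod_lt n (show 0 < c by omega)
        rw [← hTdef] at e1
        have e3 : c * 1 ≤ c * T := Nat.mul_le_mul_left c hT1
        have e4 : 2 * c * T = c * T + c * T := by ring
        omega
      have h3 : X * T ≤ (8 * c * good.card) * T := by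
        calc X * T ≤ 4 * n * good.card := h1
          _ ≤ 4 * (2 * c * T) * good.card := by gcongr
          _ = _ := by ring
      have h4 : X ≤ 8 * c * good.card := Nat.le_of_mul_le_mul_right h3 hT1
      have h5 : (8 * c) * (3 * N) ≤ (8 * c) * good.card := by
        calc (8 * c) * (3 * N) = 24 * c * N := by ring
          _ ≤ _ := hNX.trans h4
      exact Nat.le_of_mul_le_mul_left h5 (by omega))
    (by
      intro h
      exact hβne (Units.ext h))
    hβK
    (by
      intro b _
      rw [hg]
      refine mul_ne_zero (mul_ne_zero (pow_ne_zero _ hσ0) (pow_ne_zero _ hz0)) ?_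
      rw [Finset.prod_ne_zero_iff]
      intro l hl
      have := hSpos l hl
      positivity)
    (by
      intro b hb
      have hb' := hb
      rw [hB, Finset.mem_filter] at hb'
      rw [hg, hG]
      simp only
      rw [abs_mul, abs_mul, abs_pow, hσ, one_pow, one_mul, abs_pow, Finset.abs_prod]
      push_cast
      have hz1 : 1 ≤ |z| := by rw [← Int.natCast_natAbs]; exact_mod_cast hzn
      apply mul_le_mul
      · exact pow_le_pow_right₀ hz1 hb'.2
      · apply Finset.prod_le_prod
        · intro l _; positivity
        · intro l hl
          rw [abs_pow, Nat.abs_cast]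
          apply pow_le_pow_right₀
          · exact_mod_cast hSpos l hl
          · have := le_of_abs_le (hk b hb l hl)
            apply Int.toNat_le.2
            push_cast at this ⊢
            linarith
      · positivity
      · positivity)
    (by
      have : 0 < G := by
        rw [hG]
        apply Nat.mul_pos (pow_pos hzn _)
        exact Finset.prod_pos (fun l hl => pow_pos (hSpos l hl) _)
      exact this)
    (by
      intro b hb
      rw [hgval b hb]
      have e1 : (p : ℤ_[p]) ^ m ∣ 1 - ((Λ ^ (Q * b / n) : ℤ_[p]ˣ) : ℤ_[p]) := by
        rw [Units.val_pow_eq_pow_val, dvd_sub_comm]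
        refine hΛ.trans ?_
        have := sub_dvd_pow_sub_pow (Λ : ℤ_[p]) 1 (Q * b / n)
        rwa [one_pow] at this
      have e2 : ((∏ l ∈ S, U l ^ (E l : ℤ) : ℤ_[p]ˣ) : ℤ_[p]) * (β : ℤ_[p]) ^ b * ((Λ ^ (Q * b / n))⁻¹ : ℤ_[p]ˣ)
          - ((∏ l ∈ S, U l ^ (E l : ℤ) : ℤ_[p]ˣ) : ℤ_[p]) * (β : ℤ_[p]) ^ b =
          (1 - ((Λ ^ (Q * b / n) : ℤ_[p]ˣ) : ℤ_[p])) * (((∏ l ∈ S, U l ^ (E l : ℤ) : ℤ_[p]ˣ) : ℤ_[p]) * (β : ℤ_[p]) ^ b * ((Λ ^ (Q * b / n))⁻¹ : ℤ_[p]ˣ)) := by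
        have := Units.mul_inv (Λ ^ (Q * b / n))
        linear_combination (-(((∏ l ∈ S, U l ^ (E l : ℤ) : ℤ_[p]ˣ) : ℤ_[p]) * (β : ℤ_[p]) ^ b)) * (-this)
      rw [e2]
      exact e1.mul_right _)
  have hGc := G_bound S hSpos u v z.natAbs n c T X Y hzn hTc hY hY1 hY2
  calc (p ^ m) ^ c ≤ (64 ^ X * G ^ 3) ^ c := Nat.pow_le_pow_left hdet c
    _ = 64 ^ (X * c) * (G ^ c) ^ 3 := by rw [mul_pow, ← pow_mul, ← pow_mul, ← pow_mul, mul_comm 3 c]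
    _ ≤ 64 ^ (X * c) * (Y ^ 8 * (∏ l ∈ S, l) ^ (2 * X * c)) ^ 3 := by
      apply Nat.mul_le_mul_left
      exact Nat.pow_le_pow_left hGc 3
    _ = _ := by
      rw [mul_pow, mul_pow, ← pow_mul, ← pow_mul, ← pow_mul]
      rw [show 2 * X * c * 3 = 6 * (X * c) by ring]
      ring


theorem sunit_prod {S : Finset ℕ} {x : ℤ} (hx : IsSUnit S x) :
    x.natAbs = ∏ l ∈ S, l ^ (x.natAbs.factorization l) := by
  have h0 : x.natAbs ≠ 0 := Int.natAbs_ne_zero.2 hx.1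
  conv_lhs => rw [← Nat.prod_factorization_pow_eq_self h0]
  apply Finsupp.prod_of_support_subset
  · intro q hq
    rw [Nat.support_factorization, Nat.mem_primeFactors] at hq
    exact hx.2 q hq.1 (Int.natCast_dvd.2 hq.2.1)
  · intro i _; simp

theorem sunit_split {S : Finset ℕ} {x : ℤ} (hx : IsSUnit S x) {p : ℕ} (hp : p ∈ S) :
    ∃ s : ℤ, |s| = 1 ∧ s * s = 1 ∧ x = s * (p : ℤ) ^ (x.natAbs.factorization p) *
      ∏ l ∈ S.erase p, (l : ℤ) ^ (x.natAbs.factorization l) := by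
  refine ⟨x.sign, ?_, ?_, ?_⟩
  · exact Int.abs_sign_of_ne_zero hx.1
  · rw [← abs_mul_abs_self, Int.abs_sign_of_ne_zero hx.1, one_mul]
  · conv_lhs => rw [← Int.sign_mul_natAbs x, sunit_prod hx, ← Finset.mul_prod_erase S _ hp]
    push_cast
    ring

theorem pow_mul_unique {p : ℕ} (hp : p.Prime) {a b : ℕ} {A B : ℤ} (hA : ¬ (p : ℤ) ∣ A) (hB : ¬ (p : ℤ) ∣ B)
    (h : (p : ℤ) ^ a * A = (p : ℤ) ^ b * B) : A = B ∧ a = b := by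
  have hp0 : (p : ℤ) ≠ 0 := by exact_mod_cast hp.ne_zero
  rcases lt_trichotomy a b with hab | hab | hab
  · obtain ⟨c, rfl⟩ := Nat.exists_eq_add_of_lt hab
    rw [add_assoc, pow_add, mul_assoc] at h
    have := mul_left_cancel₀ (pow_ne_zero a hp0) h
    exact absurd (this ▸ (Dvd.dvd.mul_right (dvd_pow_self _ (by omega)) _)) hA
  · subst hab
    exact ⟨mul_left_cancel₀ (pow_ne_zero a hp0) h, rfl⟩
  · obtain ⟨c, rfl⟩ := Nat.exists_eq_add_of_lt hab
    rw [add_assoc, pow_add, mul_assoc] at h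
    have := mul_left_cancel₀ (pow_ne_zero b hp0) h
    exact absurd (this ▸ (Dvd.dvd.mul_right (dvd_pow_self _ (by omega)) _)) hB

theorem not_dvd_prod_erase {S : Finset ℕ} (hS : ∀ p ∈ S, p.Prime) {p : ℕ} (hp : p ∈ S) (v : ℕ → ℕ) :
    ¬ (p : ℤ) ∣ ∏ l ∈ S.erase p, (l : ℤ) ^ (v l) := by
  intro h
  have hpp := hS p hp
  have h' : p ∣ ∏ l ∈ S.erase p, l ^ (v l) := by exact_mod_cast h
  rw [hpp.prime.dvd_finsetProd_iff] at h'
  obtain ⟨l, hl, hd⟩ := h'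
  have := (Nat.prime_dvd_prime_iff_eq hpp (hS l (Finset.mem_of_mem_erase hl))).1 (hpp.dvd_of_dvd_pow hd)
  exact Finset.ne_of_mem_erase hl this.symm

theorem reduction {S : Finset ℕ} (hS : ∀ p ∈ S, p.Prime) {p : ℕ} (hpS : p ∈ S) {x y w z : ℤ} {n m Y : ℕ}
    (hx : IsSUnit S x) (hw : IsSUnit S w) (hy0 : y ≠ 0) (hz0 : z ≠ 0)
    (hy : ((p : ℤ) ^ (x.natAbs.factorization p + m)) ∣ y) (hm : 2 < p ^ m)
    (hxY : |x| ≤ Y) (hyY : |y| ≤ Y) (heq : x + y = w * z ^ n) :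
    ∃ (σ z' : ℤ) (u v : ℕ → ℕ), |σ| = 1 ∧ ¬ (p : ℤ) ∣ z' ∧
      ((p ^ m : ℕ) : ℤ) ∣ σ * z' ^ n * ∏ l ∈ S.erase p, (l : ℤ) ^ (u l) - ∏ l ∈ S.erase p, (l : ℤ) ^ (v l) ∧
      |z'| ^ n * ∏ l ∈ S.erase p, (l : ℤ) ^ (u l) ≠ ∏ l ∈ S.erase p, (l : ℤ) ^ (v l) ∧
      z'.natAbs ^ n * ∏ l ∈ S.erase p, l ^ u l ≤ 2 * Y ∧ ∏ l ∈ S.erase p, l ^ v l ≤ Y := by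
  have hp := hS p hpS
  have hpZ : Prime (p : ℤ) := Nat.prime_iff_prime_int.1 hp
  obtain ⟨sx, sx1, sx2, hxe⟩ := sunit_split hx hpS
  obtain ⟨sw, sw1, sw2, hwe⟩ := sunit_split hw hpS
  set e := x.natAbs.factorization p
  set f := w.natAbs.factorization p
  set u : ℕ → ℕ := fun l => w.natAbs.factorization l
  set v : ℕ → ℕ := fun l => x.natAbs.factorization l
  have hVp := not_dvd_prod_erase hS hpS v
  have hWp := not_dvd_prod_erase hS hpS u
  have hV0 : 0 < ∏ l ∈ S.erase p, (l : ℤ) ^ (v l) := by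
    apply Finset.prod_pos
    intro l hl
    have := (hS l (Finset.mem_of_mem_erase hl)).pos
    positivity
  have hW0 : 0 < ∏ l ∈ S.erase p, (l : ℤ) ^ (u l) := by
    apply Finset.prod_pos
    intro l hl
    have := (hS l (Finset.mem_of_mem_erase hl)).pos
    positivity
  have cV : ((∏ l ∈ S.erase p, l ^ (v l) : ℕ) : ℤ) = ∏ l ∈ S.erase p, (l : ℤ) ^ (v l) := by push_cast; rfl
  have cW : ((∏ l ∈ S.erase p, l ^ (u l) : ℕ) : ℤ) = ∏ l ∈ S.erase p, (l : ℤ) ^ (u l) := by push_cast; rfl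
  obtain ⟨z', hz', hzp⟩ : ∃ z' : ℤ, z = (p : ℤ) ^ multiplicity (p : ℤ) z * z' ∧ ¬ (p : ℤ) ∣ z' := by
    have hfin : FiniteMultiplicity (p : ℤ) z := Int.finiteMultiplicity_iff.2 ⟨by simpa using hp.ne_one, hz0⟩
    obtain ⟨c, hc, hd⟩ := hfin.exists_eq_pow_mul_and_not_dvd
    exact ⟨c, hc, hd⟩
  obtain ⟨y', hy'⟩ := hy
  set k := multiplicity (p : ℤ) z
  set V : ℤ := ∏ l ∈ S.erase p, (l : ℤ) ^ (v l) with hV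
  set W : ℤ := ∏ l ∈ S.erase p, (l : ℤ) ^ (u l) with hW
  have hsn : ∀ s : ℤ, |s| = 1 → ¬ (p : ℤ) ∣ s := by
    intro s hs h
    rw [← dvd_abs, hs] at h
    exact hpZ.not_isUnit (isUnit_of_dvd_one h)
  have hm0 : m ≠ 0 := by rintro rfl; simp at hm
  have hkey := pow_mul_unique hp (a := e) (b := f + k * n) (A := sx * V + (p : ℤ) ^ m * y') (B := sw * W * z' ^ n)
    (by
      intro h
      have h := (dvd_add_left (Dvd.dvd.mul_right (dvd_pow_self (p : ℤ) hm0) y')).1 h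
      rcases hpZ.dvd_or_dvd h with h | h
      · exact hsn sx sx1 h
      · exact hVp h)
    (by
      intro h
      rcases hpZ.dvd_or_dvd h with h | h
      · rcases hpZ.dvd_or_dvd h with h | h
        · exact hsn sw sw1 h
        · exact hWp h
      · exact hzp (hpZ.dvd_of_dvd_pow h))
    (by
      have h1 := heq
      rw [hz', hwe, hy', hxe] at h1
      rw [pow_add, pow_mul]
      rw [mul_pow] at h1
      rw [pow_add] at h1
      linear_combination h1)
  obtain ⟨hk1, hk2⟩ := hkey
  have hpe : (1 : ℤ) ≤ (p : ℤ) ^ e := by exact_mod_cast Nat.one_le_pow e p hp.pos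
  refine ⟨sx * sw, z', u, v, ?_, hzp, ?_, ?_, ?_, ?_⟩
  · rw [abs_mul, sx1, sw1, one_mul]
  · refine ⟨sx * y', ?_⟩
    push_cast
    rw [← hV, ← hW]
    linear_combination (-sx) * hk1 + V * sx2
  · rw [← hV, ← hW]
    intro h
    have h1 : |sw * W * z' ^ n| = |sx * V| := by
      rw [abs_mul, abs_mul, sw1, abs_of_pos hW0, abs_pow, abs_mul, sx1, abs_of_pos hV0, one_mul, one_mul, mul_comm, h]
    have hp0 : (p : ℤ) ≠ 0 := hpZ.ne_zero
    rcases abs_eq_abs.1 h1 with h2 | h2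
    · have : (p : ℤ) ^ m * y' = 0 := by linarith
      rcases mul_eq_zero.1 this with h3 | h3
      · exact pow_ne_zero _ hp0 h3
      · apply hy0; rw [hy', h3, mul_zero]
    · have h3 : (p : ℤ) ^ m ∣ 2 * V := by
        refine ⟨- sx * y', ?_⟩
        linear_combination sx * (hk1.trans h2) - 2 * V * sx2
      have hcop : IsCoprime ((p : ℤ) ^ m) V := IsCoprime.pow_left ((hpZ.coprime_iff_not_dvd).2 hVp)
      have h4 := hcop.dvd_of_dvd_mul_right h3
      have h5 : p ^ m ∣ 2 := by exact_mod_cast h4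
      exact absurd (Nat.le_of_dvd (by norm_num) h5) (by omega)
  · have h1 : ((z'.natAbs ^ n * ∏ l ∈ S.erase p, l ^ u l : ℕ) : ℤ) = |sw * W * z' ^ n| := by
      rw [abs_mul, abs_mul, sw1, abs_of_pos hW0, abs_pow, one_mul, Nat.cast_mul, cW]
      push_cast
      ring
    have h2 : |x + y| = (p : ℤ) ^ e * |sw * W * z' ^ n| := by
      rw [← hk1, hxe, hy', ← abs_of_pos (lt_of_lt_of_le one_pos hpe), ← abs_mul, abs_of_pos (lt_of_lt_of_le one_pos hpe)]
      congr 1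
      ring
    have h3 : |x + y| ≤ |x| + |y| := abs_add_le x y
    have h4 : |sw * W * z' ^ n| ≤ (p : ℤ) ^ e * |sw * W * z' ^ n| :=
      le_mul_of_one_le_left (abs_nonneg _) hpe
    zify at h1 ⊢
    push_cast at h1
    rw [h1]
    linarith
  · have h1 : |x| = (p : ℤ) ^ e * V := by
      rw [hxe, abs_mul, abs_mul, sx1, one_mul, abs_of_pos hV0, abs_of_pos (lt_of_lt_of_le one_pos hpe)]
    have h2 : V ≤ (p : ℤ) ^ e * V := le_mul_of_one_le_left hV0.le hpe
    have h3 : ((∏ l ∈ S.erase p, l ^ v l : ℕ) : ℤ) ≤ Y := by rw [cV]; linarith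
    exact_mod_cast h3


theorem exists_large_prime {S : Finset ℕ} (hne : S.Nonempty) {y : ℤ} (hy : IsSUnit S y) :
    ∃ p ∈ S, y.natAbs ≤ (p ^ (y.natAbs.factorization p)) ^ S.card := by
  obtain ⟨p, hp, hmax⟩ := Finset.exists_max_image S (fun l => l ^ (y.natAbs.factorization l)) hne
  refine ⟨p, hp, ?_⟩
  conv_lhs => rw [sunit_prod hy]
  exact Finset.prod_le_pow_card _ _ _ hmax

theorem exponent_le {x y w z : ℤ} {n : ℕ} (hw : w ≠ 0) (hz : 1 < |z|) (hxy : |x| ≤ |y|)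
    (heq : x + y = w * z ^ n) : n ≤ Nat.log 2 y.natAbs + 1 := by
  have h1 : (2 : ℤ) ^ n ≤ |x + y| := by
    rw [heq, abs_mul, abs_pow]
    have a1 : (2 : ℤ) ^ n ≤ |z| ^ n := pow_le_pow_left₀ (by norm_num) (by linarith) n
    have a2 : 1 ≤ |w| := Int.one_le_abs hw
    have a3 : |z| ^ n ≤ |w| * |z| ^ n := le_mul_of_one_le_left (by positivity) a2
    linarith
  have h2 : |x + y| ≤ |x| + |y| := abs_add_le x y
  have h3 : (2 : ℤ) ^ n ≤ 2 * (y.natAbs : ℤ) := by rw [Int.natCast_natAbs]; linarith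
  have h4 : 2 ^ n ≤ 2 * y.natAbs := by exact_mod_cast h3
  have h5 : y.natAbs < 2 ^ (Nat.log 2 y.natAbs + 1) := Nat.lt_pow_succ_log_self (by norm_num) _
  have h6 : 2 ^ n < 2 ^ (Nat.log 2 y.natAbs + 2) := by
    calc 2 ^ n ≤ 2 * y.natAbs := h4
      _ < 2 * 2 ^ (Nat.log 2 y.natAbs + 1) := by omega
      _ = _ := by ring
  have := (Nat.pow_lt_pow_iff_right (by norm_num : 1 < 2)).1 h6
  omega

theorem totient_ge {p K : ℕ} (hp : p.Prime) (hK : 0 < K) : K ≤ Nat.totient (p ^ K) := by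
  rw [Nat.totient_prime_pow hp hK]
  have h1 : K - 1 < 2 ^ (K - 1) := Nat.lt_two_pow_self
  have h2 : 2 ^ (K - 1) ≤ p ^ (K - 1) := Nat.pow_le_pow_left hp.two_le _
  have h3 : p ^ (K - 1) ≤ p ^ (K - 1) * (p - 1) := Nat.le_mul_of_pos_right _ (by have := hp.two_le; omega)
  omega

set_option maxHeartbeats 1000000 in
theorem main_ordered {S : Finset ℕ} (hS : ∀ p ∈ S, p.Prime) {a : ℕ} (ha : 0 < a) {s P ω D K M : ℕ}
    (hs : s = S.card) (hP : P = ∏ l ∈ S, l) (hω : ω = 64 * P ^ 6) (hD : D = 4 * s * ω)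
    (hK : K = 2304 * s * D) (hM : M = P ^ K)
    (x y w : ℤ) (n : ℕ) (z : ℤ) (hx : IsSUnit S x) (hy : IsSUnit S y) (hw : IsSUnit S w)
    (hgcd : Int.gcd x y ≤ a) (hz : 1 < |z|) (heq : x + y = w * z ^ n) (hxy : |x| ≤ |y|) :
    n ≤ K + 2 * D + 10 + 8 * a * s + 192 * s * (M * (M * D) ^ s) := by
  by_contra hC
  push Not at hC
  set Y := y.natAbs with hYdef
  set h := Nat.log 2 Y with hh
  have hnh : n ≤ h + 1 := exponent_le hw.1 hz hxy heq
  have hY0 : Y ≠ 0 := Int.natAbs_ne_zero.2 hy.1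
  have hYh : 2 ^ h ≤ Y := Nat.pow_log_le_self 2 hY0
  have hY2 : 2 ≤ Y := le_trans (by
    calc 2 = 2 ^ 1 := rfl
      _ ≤ 2 ^ h := Nat.pow_le_pow_right (by norm_num) (by omega)) hYh
  have hne : S.Nonempty := by
    rw [Finset.nonempty_iff_ne_empty]
    rintro rfl
    have := sunit_prod hy
    rw [Finset.prod_empty] at this
    omega
  have hs1 : 1 ≤ s := by rw [hs]; exact hne.card_pos
  have hP1 : 1 ≤ P := by rw [hP]; exact Finset.prod_pos (fun l hl => (hS l hl).pos)
  have hω1 : 1 ≤ ω := by rw [hω]; have := Nat.one_le_pow 6 P hP1; omega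
  have hD1 : 1 ≤ D := by rw [hD]; exact Nat.mul_pos (by omega) hω1
  have hsD : 1 ≤ s * D := Nat.mul_pos hs1 hD1
  have hK1 : 1 ≤ K := by rw [hK, mul_assoc]; omega
  have hω2 : 64 * P ^ 6 ≤ 2 ^ ω := by rw [← hω]; exact Nat.lt_two_pow_self.le
  have hPω : P ≤ 2 ^ ω := by
    have : P ^ 1 ≤ P ^ 6 := Nat.pow_le_pow_right hP1 (by norm_num)
    rw [pow_one] at this
    omega
  obtain ⟨p, hpS, hpY⟩ := exists_large_prime hne hy
  have hp := hS p hpS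
  have : Fact p.Prime := ⟨hp⟩
  rw [← hs] at hpY
  rw [← hYdef] at hpY
  set e := x.natAbs.factorization p with he
  set t := Y.factorization p with ht
  have hg0 : 0 < Int.gcd x y := Int.gcd_pos_of_ne_zero_left _ hx.1
  have hpx : p ^ e ∣ x.natAbs := Nat.ordProj_dvd _ _
  have hpy : p ^ t ∣ Y := Nat.ordProj_dvd _ _
  -- small powers of `2` are below `Y`
  have hsmallY : ∀ B : ℕ, B ≤ 2 ^ (2 * a) * (2 ^ ω) ^ (n / D) → ¬ (Y ≤ B ^ s) := by
    intro B hB hle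
    have h1 : B ^ s ≤ 2 ^ ((2 * a + ω * (n / D)) * s) := by
      rw [pow_mul, pow_add, pow_mul 2 ω]
      exact Nat.pow_le_pow_left hB s
    have h2 : 2 ^ h ≤ 2 ^ ((2 * a + ω * (n / D)) * s) := hYh.trans (hle.trans h1)
    have h3 := (Nat.pow_le_pow_iff_right (by norm_num : 1 < 2)).1 h2
    have h4 : 4 * ((2 * a + ω * (n / D)) * s) = 8 * a * s + (n / D) * D := by
      rw [hD]; ring
    have h5 : n / D * D ≤ n := Nat.div_mul_le_self _ _
    omega
  have ha2 : 2 * a ≤ 2 ^ (2 * a) := Nat.lt_two_pow_self.le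
  have het : e < t := by
    by_contra hc
    push Not at hc
    have h1 : p ^ t ∣ Int.gcd x y := Nat.dvd_gcd ((pow_dvd_pow p hc).trans hpx) hpy
    have h2 : p ^ t ≤ a := (Nat.le_of_dvd hg0 h1).trans hgcd
    refine hsmallY (p ^ t) ?_ hpY
    have h3 : 1 ≤ (2 ^ ω) ^ (n / D) := Nat.one_le_pow _ _ (by positivity)
    calc p ^ t ≤ 2 ^ (2 * a) := by omega
      _ ≤ _ := Nat.le_mul_of_pos_right _ h3
  have hpea : p ^ e ≤ a := by
    have h1 : p ^ e ∣ Int.gcd x y := Nat.dvd_gcd hpx ((pow_dvd_pow p het.le).trans hpy)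
    exact (Nat.le_of_dvd hg0 h1).trans hgcd
  obtain ⟨m, hm⟩ := Nat.exists_eq_add_of_le het.le
  have hpmY : Y ≤ (p ^ m * a) ^ s := by
    refine hpY.trans (Nat.pow_le_pow_left ?_ s)
    rw [hm, pow_add, mul_comm]
    exact Nat.mul_le_mul_left _ hpea
  set P' := ∏ l ∈ S.erase p, l with hP'
  have hP'1 : 1 ≤ P' := Finset.prod_pos (fun l hl => (hS l (Finset.mem_of_mem_erase hl)).pos)
  have hPP : p * P' = P := by rw [hP, hP']; exact Finset.mul_prod_erase S (fun l => l) hpS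
  have hP'P : P' ≤ P := by rw [← hPP]; exact Nat.le_mul_of_pos_left _ hp.pos
  have hpP : p ≤ P := by rw [← hPP]; exact Nat.le_mul_of_pos_right _ hP'1
  have hsm : 2 * P' ^ (n / D) < p ^ m := by
    by_contra hc
    push Not at hc
    refine hsmallY (p ^ m * a) ?_ hpmY
    calc p ^ m * a ≤ (2 * P' ^ (n / D)) * a := Nat.mul_le_mul_right a hc
      _ = (2 * a) * P' ^ (n / D) := by ring
      _ ≤ 2 ^ (2 * a) * (2 ^ ω) ^ (n / D) :=
        Nat.mul_le_mul ha2 (Nat.pow_le_pow_left (hP'P.trans hPω) _)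
  have hm2 : 2 < p ^ m := by
    have : 1 ≤ P' ^ (n / D) := Nat.one_le_pow _ _ hP'1
    omega
  have hz0 : z ≠ 0 := by rintro rfl; simp at hz
  obtain ⟨σ, z', u, v, hσ, hz', hdvd, hnd, hY1, hY3⟩ := reduction (Y := Y) (m := m) hS hpS hx hw hy.1 hz0
    (by
      rw [← he, ← hm]
      exact_mod_cast Int.natCast_dvd.2 hpy)
    hm2 (by rw [hYdef, Int.natCast_natAbs]; exact hxy) (by rw [hYdef, Int.natCast_natAbs]) heq
  have hmh : m ≤ h := by
    have h1 : 2 ^ m ≤ Y := by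
      calc 2 ^ m ≤ p ^ m := Nat.pow_le_pow_left hp.two_le m
        _ ≤ p ^ t := Nat.pow_le_pow_right hp.pos (by omega)
        _ ≤ Y := Nat.le_of_dvd (by omega) hpy
    exact Nat.le_log_of_pow_le (by norm_num) h1
  have hΦK := totient_ge hp hK1
  have hΦM : Nat.totient (p ^ K) ≤ M := by
    rw [hM]
    exact (Nat.totient_le _).trans (Nat.pow_le_pow_left hpP K)
  set Φ := Nat.totient (p ^ K) with hΦ
  have hXD : h / D * D ≤ h := Nat.div_mul_le_self _ _
  have hcore := core_bound (p := p) (S.erase p)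
    (by
      intro l hl hd
      exact Finset.ne_of_mem_erase hl
        ((Nat.prime_dvd_prime_iff_eq hp (hS l (Finset.mem_of_mem_erase hl))).1 hd).symm)
    u v σ z' hσ hz' n m K D (48 * s) (h / D) (m / K + 1) Y hdvd hnd hY2 hY1 hY3 (by omega)
    (by
      rw [Nat.le_div_iff_mul_le (by omega), ← hΦ]
      have h1 : Φ * (Φ * D) ^ (S.erase p).card ≤ M * (M * D) ^ s := by
        apply Nat.mul_le_mul hΦM
        calc (Φ * D) ^ (S.erase p).card ≤ (Φ * D) ^ s := by
              apply Nat.pow_le_pow_right (Nat.mul_pos (by omega) hD1)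
              rw [hs]; exact Finset.card_le_card (Finset.erase_subset _ _)
          _ ≤ _ := Nat.pow_le_pow_left (Nat.mul_le_mul_right D hΦM) s
      calc 4 * (Φ * (Φ * D) ^ (S.erase p).card) * (48 * s) = 192 * s * (Φ * (Φ * D) ^ (S.erase p).card) := by ring
        _ ≤ 192 * s * (M * (M * D) ^ s) := Nat.mul_le_mul_left _ h1
        _ ≤ n := by omega)
    (by
      rw [← hΦ]
      have h1 : h / D * K ≤ h / D * Φ := Nat.mul_le_mul_left _ hΦK
      have h3 : 2304 * (h / D * D) ≤ h / D * K := by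
        calc 2304 * (h / D * D) = 2304 * 1 * (h / D * D) := by ring
          _ ≤ 2304 * s * (h / D * D) := Nat.mul_le_mul_right _ (Nat.mul_le_mul_left _ hs1)
          _ = h / D * K := by rw [hK]; ring
      have h4 := Nat.div_add_mod h D
      have h5 := Nat.mod_lt h (show 0 < D by omega)
      rw [mul_comm D (h / D)] at h4
      refine le_trans ?_ h1
      refine le_trans ?_ h3
      omega)
    (Nat.succ_pos _)
    (by
      have h4 := Nat.div_add_mod m K
      have h5 := Nat.mod_lt m (show 0 < K by omega)
      rw [mul_add, mul_one]; omega)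
    (by
      rw [Nat.le_div_iff_mul_le (by omega)]
      have h4 : K * (m / K) ≤ m := Nat.mul_div_le m K
      have h6 : ∀ q, 2 * (24 * (48 * s) * (q + 1) * D) = K * q + K := by
        intro q; rw [hK]; ring
      have h7 := h6 (m / K)
      omega)
    hD1 hsm
  rw [← hP'] at hcore
  set X := h / D with hX
  have h1 : (64 * P' ^ 6) ^ (X * (48 * s)) ≤ (2 ^ ω) ^ (X * (48 * s)) := by
    apply Nat.pow_le_pow_left
    refine le_trans ?_ hω2
    exact Nat.mul_le_mul_left _ (Nat.pow_le_pow_left hP'P 6)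
  have h2 : Y ^ 48 ≤ ((2 ^ ω) ^ (X * (48 * s)) * (2 ^ a) ^ (48 * s)) * Y ^ 24 := by
    calc Y ^ 48 ≤ ((p ^ m * a) ^ s) ^ 48 := Nat.pow_le_pow_left hpmY 48
      _ = (p ^ m) ^ (48 * s) * a ^ (48 * s) := by rw [← pow_mul, mul_comm s 48, mul_pow]
      _ ≤ ((2 ^ ω) ^ (X * (48 * s)) * Y ^ 24) * (2 ^ a) ^ (48 * s) := by
        apply Nat.mul_le_mul
        · exact hcore.trans (Nat.mul_le_mul_right _ h1)
        · exact Nat.pow_le_pow_left Nat.lt_two_pow_self.le _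
      _ = _ := by ring
  have h3 : Y ^ 24 ≤ (2 ^ ω) ^ (X * (48 * s)) * (2 ^ a) ^ (48 * s) := by
    have : Y ^ 48 = Y ^ 24 * Y ^ 24 := by ring
    rw [this] at h2
    exact Nat.le_of_mul_le_mul_right h2 (by positivity)
  have h4 : 2 ^ (h * 24) ≤ 2 ^ (ω * (X * (48 * s)) + a * (48 * s)) := by
    rw [pow_add, pow_mul, pow_mul, pow_mul 2 a]
    exact (Nat.pow_le_pow_left hYh 24).trans h3
  have h5 := (Nat.pow_le_pow_iff_right (by norm_num : 1 < 2)).1 h4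
  have h6 : ω * (X * (48 * s)) = 12 * (X * D) := by rw [hD]; ring
  have h7 : a * (48 * s) = 6 * (8 * a * s) := by ring
  omega


theorem bounded_exponent_sums_of_S_units
    (S : Finset ℕ) (hS : ∀ p ∈ S, p.Prime) (a : ℕ) (ha : 0 < a) :
    ∃ C : ℕ, ∀ (x y w : ℤ) (n : ℕ) (z : ℤ),
      IsSUnit S x → IsSUnit S y → IsSUnit S w → Int.gcd x y ≤ a →
      2 ≤ n → 1 < |z| → x + y = w * z ^ n → n ≤ C := by
  obtain ⟨s, hs⟩ : ∃ s, s = S.card := ⟨_, rfl⟩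
  obtain ⟨P, hP⟩ : ∃ P, P = ∏ l ∈ S, l := ⟨_, rfl⟩
  obtain ⟨ω, hω⟩ : ∃ ω, ω = 64 * P ^ 6 := ⟨_, rfl⟩
  obtain ⟨D, hD⟩ : ∃ D, D = 4 * s * ω := ⟨_, rfl⟩
  obtain ⟨K, hK⟩ : ∃ K, K = 2304 * s * D := ⟨_, rfl⟩
  obtain ⟨M, hM⟩ : ∃ M, M = P ^ K := ⟨_, rfl⟩
  refine ⟨K + 2 * D + 10 + 8 * a * s + 192 * s * (M * (M * D) ^ s), ?_⟩
  intro x y w n z hx hy hw hg _ hz heq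
  rcases le_total |x| |y| with h | h
  · exact main_ordered hS ha hs hP hω hD hK hM x y w n z hx hy hw hg hz heq h
  · exact main_ordered hS ha hs hP hω hD hK hM y x w n z hy hx hw (by rwa [Int.gcd_comm]) hz
      (by rw [add_comm]; exact heq) h
end

section
/- Let S be a finite set of prime numbers and let n ≥ 2 be a fixed integer. There are only finitely many triples (x, y, z) with z a nonzero integer, x and y S-units, gcd(x, y) nth-power free, and x + y = z^n. -/
/-- A natural number is `n`th-power free if no `n`th power of a prime divides it. -/
def NthPowerFree (n d : ℕ) : Prop :=
  ∀ p : ℕ, p.Prime → ¬ p ^ n ∣ d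

section

open Finset


lemma desc_smeval {R : Type*} [CommRing R] (a : R) (j : ℕ) :
    (descPochhammer ℤ j).smeval a = ∏ i ∈ range j, (a - i) := by
  induction j with
  | zero => simp
  | succ j ih =>
    rw [descPochhammer_succ_right, Polynomial.smeval_mul, ih, prod_range_succ]
    simp [Polynomial.smeval_sub, Polynomial.smeval_natCast]

/-- product formula for generalized binomials -/
lemma rchoose_eq_prod (a : ℚ) (j : ℕ) :
    Ring.choose a j = (∏ i ∈ range j, (a - i)) / (j.factorial : ℚ) := by
  have h := Ring.choose_eq_smul (a := a) (n := j)
  rw [h, desc_smeval, smul_eq_mul]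
  field_simp

lemma rchoose_abs_le (a : ℚ) (j M : ℕ) (ha : |a| ≤ M + 1) :
    |Ring.choose a j| ≤ 2 ^ (M + j) := by
  rw [rchoose_eq_prod, abs_div, abs_prod, Nat.abs_cast]
  have h1 : ∏ i ∈ range j, |a - i| ≤ ∏ i ∈ range j, ((M + 1 + i : ℕ) : ℚ) := by
    apply prod_le_prod
    · intros; positivity
    · intro i _
      have := abs_sub a i
      have h2 : |(i:ℚ)| = i := Nat.abs_cast i
      push_cast
      linarith
  have h2 : ∏ i ∈ range j, (M + 1 + i) = (M+j).choose j * j.factorial := by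
    rw [← Nat.ascFactorial_eq_prod_range, Nat.ascFactorial_eq_factorial_mul_choose, mul_comm]
  rw [div_le_iff₀ (by positivity)]
  refine h1.trans ?_
  rw [← Nat.cast_prod, h2]
  push_cast
  gcongr
  exact_mod_cast Nat.choose_le_two_pow _ _

lemma rchoose_ne_zero (a : ℚ) (j : ℕ) (ha : ∀ i : ℕ, a ≠ i) : Ring.choose a j ≠ 0 := by
  rw [rchoose_eq_prod]
  apply div_ne_zero
  · rw [prod_ne_zero_iff]
    intro i _
    exact sub_ne_zero.2 (ha i)
  · positivity

/-- integrality -/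
lemma fact_dvd (n : ℕ) (a : ℤ) (j : ℕ) :
    (j.factorial : ℤ) ∣ (n : ℤ) ^ j * ∏ i ∈ range j, (a - n * i) := by
  have key : j.factorial ∣ ((n : ℤ) ^ j * ∏ i ∈ range j, (a - n * i)).natAbs := by
    rw [Nat.dvd_iff_prime_pow_dvd_dvd]
    intro p e hp hpe
    rw [← Int.natCast_dvd]
    by_cases hpn : p ∣ n
    · have he : e ≤ j := by
        have := Fact.mk hp
        rw [padicValNat_dvd_iff_le (Nat.factorial_ne_zero j)] at hpe
        have h1 := sub_one_mul_padicValNat_factorial (p := p) j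
        have h2 : 1 ≤ p - 1 := by have := hp.two_le; omega
        have : padicValNat p j.factorial ≤ (p-1) * padicValNat p j.factorial :=
          Nat.le_mul_of_pos_left _ h2
        omega
      apply Dvd.dvd.mul_right
      have : p ^ e ∣ n ^ j := (pow_dvd_pow p he).trans (pow_dvd_pow_of_dvd hpn j)
      exact_mod_cast this
    · apply Dvd.dvd.mul_left
      have hc : IsCoprime (n : ℤ) ((p ^ e : ℕ) : ℤ) := by
        rw [Nat.isCoprime_iff_coprime]
        exact (Nat.Coprime.pow_left e ((Nat.Prime.coprime_iff_not_dvd hp).2 hpn)).symm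
      obtain ⟨u, w, huw⟩ := hc
      have hc' : IsCoprime ((p ^ e : ℕ) : ℤ) (u ^ j) := by
        apply IsCoprime.pow_right
        exact ⟨w, n, by linarith⟩
      apply hc'.dvd_of_dvd_mul_left
      have h3 : u ^ j * ∏ i ∈ range j, (a - n * i) ≡ ∏ i ∈ range j, (u * a - i) [ZMOD ((p ^ e : ℕ) : ℤ)] := by
        have : u ^ j = ∏ i ∈ range j, u := by simp
        rw [this, ← prod_mul_distrib]
        apply Int.ModEq.prod
        intro i _
        rw [Int.modEq_iff_dvd]
        refine ⟨- (w * i), ?_⟩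
        linear_combination i * huw
      rw [Int.ModEq.dvd_iff h3]
      have h4 := Ring.descPochhammer_eq_factorial_smul_choose (u * a) j
      rw [desc_smeval] at h4
      have h5 : ((p ^ e : ℕ) : ℤ) ∣ (j.factorial : ℤ) := by exact_mod_cast hpe
      refine h5.trans ⟨Ring.choose (u * a) j, ?_⟩
      simpa using h4
  rwa [← Int.natCast_dvd] at key

/-- integer version of `n ^ (2 j) * choose (a / n) j` -/
def zc (n : ℕ) (a : ℤ) (j : ℕ) : ℤ :=
  ((n : ℤ) ^ j * ∏ i ∈ range j, (a - n * i)) / (j.factorial : ℤ)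

lemma zc_cast (n : ℕ) (hn : n ≠ 0) (a : ℤ) (j : ℕ) :
    (zc n a j : ℚ) = (n : ℚ) ^ (2 * j) * Ring.choose ((a : ℚ) / n) j := by
  unfold zc
  rw [Int.cast_div (fact_dvd n a j) (by exact_mod_cast Nat.factorial_ne_zero j), rchoose_eq_prod]
  push_cast
  have : ∏ i ∈ range j, ((a : ℚ) - n * i) = (n:ℚ) ^ j * ∏ i ∈ range j, ((a : ℚ) / n - i) := by
    have h : (n:ℚ) ^ j = ∏ i ∈ range j, (n:ℚ) := by simp
    rw [h, ← prod_mul_distrib]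
    apply prod_congr rfl
    intro i _
    have : (n:ℚ) ≠ 0 := by exact_mod_cast hn
    field_simp
  rw [this]
  ring

lemma pade_inner (α : ℚ) (k m c u : ℕ) (hu : u + c = k) :
    ∑ ij ∈ antidiagonal m, Ring.choose ((k:ℚ) - α) ij.1 * ((ij.2.choose c : ℚ) * Ring.choose α ij.2)
      = Ring.choose α c * (if c ≤ m then (u.choose (m - c) : ℚ) else 0) := by
  have h1 : ∀ j : ℕ, ((j.choose c : ℚ) * Ring.choose α j)
      = PowerSeries.coeff j (PowerSeries.X ^ c * PowerSeries.C (Ring.choose α c) *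
          PowerSeries.binomialSeries ℚ (α - c)) := by
    intro j
    rw [mul_assoc, PowerSeries.coeff_X_pow_mul']
    split_ifs with h
    · have := Ring.choose_smul_choose α h
      rw [nsmul_eq_mul] at this
      rw [this, PowerSeries.coeff_C_mul, PowerSeries.binomialSeries_coeff]
      simp
    · rw [Nat.choose_eq_zero_of_lt (by omega)]
      simp
  have h2 : ∀ i : ℕ, Ring.choose ((k:ℚ) - α) i
      = PowerSeries.coeff i (PowerSeries.binomialSeries ℚ ((k:ℚ) - α)) := by
    intro i
    simp
  simp_rw [h1, h2]
  rw [← PowerSeries.coeff_mul]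
  have h3 : PowerSeries.binomialSeries ℚ ((k:ℚ) - α) * (PowerSeries.X ^ c *
      PowerSeries.C (Ring.choose α c) * PowerSeries.binomialSeries ℚ (α - c)) =
      PowerSeries.C (Ring.choose α c) * (PowerSeries.X ^ c * PowerSeries.binomialSeries ℚ (u : ℚ)) := by
    have : (u : ℚ) = ((k:ℚ) - α) + (α - c) := by
      rw [← hu]; push_cast; ring
    rw [this, PowerSeries.binomialSeries_add]
    ring
  rw [h3, PowerSeries.coeff_C_mul, PowerSeries.coeff_X_pow_mul', PowerSeries.binomialSeries_coeff]
  simp [Ring.choose_natCast]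

lemma pade_identity (α : ℚ) (k l m : ℕ) (hm : m ≤ k + l) :
    ∑ ij ∈ antidiagonal m, (((k + l - ij.1).choose k : ℚ) * Ring.choose ((k:ℚ) - α) ij.1) *
      Ring.choose α ij.2 = ((k + l - m).choose l : ℚ) * Ring.choose (α + l) m := by
  have h1 : ∀ ij ∈ antidiagonal m, (((k + l - ij.1).choose k : ℚ) * Ring.choose ((k:ℚ) - α) ij.1) *
      Ring.choose α ij.2 = ∑ uc ∈ antidiagonal k, ((k + l - m).choose uc.1 : ℚ) *
        (Ring.choose ((k:ℚ) - α) ij.1 * ((ij.2.choose uc.2 : ℚ) * Ring.choose α ij.2)) := by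
    intro ij hij
    rw [HasAntidiagonal.mem_antidiagonal] at hij
    have : k + l - ij.1 = (k + l - m) + ij.2 := by omega
    rw [this, Nat.add_choose_eq]
    push_cast
    rw [sum_mul, sum_mul]
    apply sum_congr rfl
    intros
    ring
  rw [sum_congr rfl h1, sum_comm]
  simp_rw [← mul_sum]
  have h2 : ∀ uc ∈ antidiagonal k, ((k + l - m).choose uc.1 : ℚ) *
      ∑ ij ∈ antidiagonal m, Ring.choose ((k:ℚ) - α) ij.1 * ((ij.2.choose uc.2 : ℚ) * Ring.choose α ij.2)
      = Ring.choose α uc.2 * (if uc.2 ≤ m then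
        ((k + l - m).choose uc.1 * uc.1.choose (m - uc.2) : ℚ) else 0) := by
    intro uc huc
    rw [HasAntidiagonal.mem_antidiagonal] at huc
    rw [pade_inner α k m uc.2 uc.1 huc]
    split_ifs <;> ring
  rw [sum_congr rfl h2, Ring.add_choose_eq m (Commute.all α (l:ℚ)), mul_sum]
  rw [← Nat.sum_antidiagonal_swap, Nat.sum_antidiagonal_eq_sum_range_succ_mk,
    Nat.sum_antidiagonal_eq_sum_range_succ_mk]
  simp only [Prod.swap]
  by_cases hmk : m ≤ k
  · rw [← sum_subset (range_mono (show m + 1 ≤ k + 1 by omega))]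
    · apply sum_congr rfl
      intro c hc
      rw [mem_range] at hc
      rw [if_pos (by omega), Ring.choose_natCast]
      have e1 : (k - c).choose (m - c) = (k - c).choose (k - m) := by
        rw [← Nat.choose_symm (by omega : m - c ≤ k - c)]
        congr 1; omega
      have e2 := Nat.choose_mul (n := k + l - m) (k := k - c) (s := k - m)
         (by omega)
      have e3 : k + l - m - (k - m) = l := by omega
      have e4 : k - c - (k - m) = m - c := by omega
      have e5 : (k + l - m).choose (k - m) = (k + l - m).choose l := by
        rw [← Nat.choose_symm (by omega : l ≤ k + l - m)]
        congr 1; omega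
      rw [e3, e4, e5] at e2
      have e6 : ((k + l - m).choose (k - c) : ℚ) * ((k - c).choose (m - c) : ℚ) =
        ((k + l - m).choose l : ℚ) * (l.choose (m - c) : ℚ) := by
        rw [e1]; exact_mod_cast e2
      rw [e6]; ring
    · intro c hc1 hc2
      rw [mem_range] at hc1 hc2
      rw [if_neg (by omega), mul_zero]
  · rw [Nat.choose_eq_zero_of_lt (by omega : k + l - m < l)]
    simp only [Nat.cast_zero, zero_mul, sum_const_zero]
    apply sum_eq_zero
    intro c hc
    rw [mem_range] at hc
    rw [Nat.choose_eq_zero_of_lt (by omega : k - c < m - c)]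
    simp


open Polynomial in
/-- numerator of the Pade approximant to `(1 + X) ^ (1 / n)` -/
noncomputable def padeP (n k l : ℕ) : ℤ[X] :=
  ∑ j ∈ range (k + 1), monomial j
    ((n : ℤ) ^ (2 * (k + l - j)) * ((k + l - j).choose l : ℤ) * zc n (1 + l * n) j)

open Polynomial in
/-- denominator of the Pade approximant to `(1 + X) ^ (1 / n)` -/
noncomputable def padeQ (n k l : ℕ) : ℤ[X] :=
  ∑ j ∈ range (l + 1), monomial j
    ((n : ℤ) ^ (2 * (k + l - j)) * ((k + l - j).choose k : ℤ) * zc n (k * n - 1) j)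

lemma padeP_coeff (n k l : ℕ) (hn : n ≠ 0) (j : ℕ) :
    ((padeP n k l).coeff j : ℚ) = if j ≤ k then
      (n : ℚ) ^ (2 * (k + l)) * (((k + l - j).choose l : ℚ) * Ring.choose (1 / (n:ℚ) + l) j) else 0 := by
  have hn' : (n:ℚ) ≠ 0 := by exact_mod_cast hn
  rw [padeP, Polynomial.finsetSum_coeff]
  simp_rw [Polynomial.coeff_monomial]
  rw [Finset.sum_ite_eq']
  simp only [mem_range, Nat.lt_succ_iff]
  split_ifs with h
  · push_cast
    rw [zc_cast n hn]
    have e1 : ((1 + l * n : ℤ) : ℚ) / n = 1 / (n:ℚ) + l := by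
      push_cast; field_simp
    have e2 : 2 * (k + l) = 2 * (k + l - j) + 2 * j := by omega
    rw [e1, e2, pow_add]
    ring
  · simp

lemma padeQ_coeff (n k l : ℕ) (hn : n ≠ 0) (j : ℕ) :
    ((padeQ n k l).coeff j : ℚ) = if j ≤ l then
      (n : ℚ) ^ (2 * (k + l)) * (((k + l - j).choose k : ℚ) * Ring.choose ((k:ℚ) - 1 / (n:ℚ)) j) else 0 := by
  have hn' : (n:ℚ) ≠ 0 := by exact_mod_cast hn
  rw [padeQ, Polynomial.finsetSum_coeff]
  simp_rw [Polynomial.coeff_monomial]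
  rw [Finset.sum_ite_eq']
  simp only [mem_range, Nat.lt_succ_iff]
  split_ifs with h
  · push_cast
    rw [zc_cast n hn]
    have e1 : ((k * n - 1 : ℤ) : ℚ) / n = (k:ℚ) - 1 / (n:ℚ) := by
      push_cast; field_simp
    have e2 : 2 * (k + l) = 2 * (k + l - j) + 2 * j := by omega
    rw [e1, e2, pow_add]
    ring
  · simp

lemma padeP_natDegree (n k l : ℕ) : (padeP n k l).natDegree ≤ k := by
  apply Polynomial.natDegree_sum_le_of_forall_le
  intro j hj
  rw [mem_range] at hj
  exact (Polynomial.natDegree_monomial_le _).trans (by omega)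

lemma padeQ_natDegree (n k l : ℕ) : (padeQ n k l).natDegree ≤ l := by
  apply Polynomial.natDegree_sum_le_of_forall_le
  intro j hj
  rw [mem_range] at hj
  exact (Polynomial.natDegree_monomial_le _).trans (by omega)

lemma pade_bound_aux (n N M i j : ℕ) (a : ℚ) (hj : j ≤ N) (hM : M ≤ N) (ha : |a| ≤ M + 1) :
    |(n : ℚ) ^ (2 * N) * (((N - j).choose i : ℚ) * Ring.choose a j)| ≤ (8 * n ^ 2 : ℚ) ^ N := by
  have h1 := rchoose_abs_le a j M ha
  have h2 : ((N - j).choose i : ℚ) ≤ 2 ^ (N - j) := by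
    exact_mod_cast Nat.choose_le_two_pow _ _
  rw [abs_mul, abs_mul, Nat.abs_cast, abs_of_nonneg (by positivity)]
  calc (n : ℚ) ^ (2 * N) * (((N - j).choose i : ℚ) * |Ring.choose a j|)
      ≤ (n : ℚ) ^ (2 * N) * (2 ^ (N - j) * 2 ^ (M + j)) := by gcongr
    _ ≤ (n : ℚ) ^ (2 * N) * 2 ^ (3 * N) := by
        rw [← pow_add]
        gcongr
        · norm_num
        · omega
    _ = _ := by
        rw [mul_pow, pow_mul, pow_mul]; norm_num; ring

lemma padeP_bound (n k l : ℕ) (hn : n ≠ 0) (j : ℕ) :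
    |(padeP n k l).coeff j| ≤ (8 * n ^ 2) ^ (k + l) := by
  have h := padeP_coeff n k l hn j
  have h1 : (1:ℚ) ≤ n := by exact_mod_cast Nat.one_le_iff_ne_zero.2 hn
  have h2 : |1 / (n:ℚ) + l| ≤ l + 1 := by
    rw [abs_of_nonneg (by positivity)]
    have : 1 / (n:ℚ) ≤ 1 := by rw [div_le_one (by linarith)]; exact h1
    linarith
  have : |((padeP n k l).coeff j : ℚ)| ≤ (8 * n ^ 2 : ℚ) ^ (k + l) := by
    rw [h]
    split_ifs with hj
    · exact pade_bound_aux n (k + l) l l j _ (by omega) (by omega) h2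
    · simp
  exact_mod_cast this

lemma padeQ_bound (n k l : ℕ) (hn : n ≠ 0) (j : ℕ) :
    |(padeQ n k l).coeff j| ≤ (8 * n ^ 2) ^ (k + l) := by
  have h := padeQ_coeff n k l hn j
  have h1 : (1:ℚ) ≤ n := by exact_mod_cast Nat.one_le_iff_ne_zero.2 hn
  have h2 : |(k:ℚ) - 1 / (n:ℚ)| ≤ k + 1 := by
    have : 1 / (n:ℚ) ≤ 1 := by rw [div_le_one (by linarith)]; exact h1
    have : 0 ≤ 1 / (n:ℚ) := by positivity
    have : (0:ℚ) ≤ k := by positivity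
    rw [abs_le]
    constructor <;> linarith
  have : |((padeQ n k l).coeff j : ℚ)| ≤ (8 * n ^ 2 : ℚ) ^ (k + l) := by
    rw [h]
    split_ifs with hj
    · exact pade_bound_aux n (k + l) k k j _ (by omega) (by omega) h2
    · simp
  exact_mod_cast this

/-- embedding of integer polynomials in rational power series -/
noncomputable def ips : Polynomial ℤ →+* PowerSeries ℚ :=
  (Polynomial.coeToPowerSeries.ringHom (R := ℚ)).comp (Polynomial.mapRingHom (Int.castRingHom ℚ))

lemma ips_coeff (P : Polynomial ℤ) (j : ℕ) : PowerSeries.coeff j (ips P) = (P.coeff j : ℚ) := by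
  simp [ips]

lemma ips_X : ips Polynomial.X = PowerSeries.X := by
  simp [ips]

lemma ips_dvd (P : Polynomial ℤ) (m : ℕ) (h : PowerSeries.X ^ m ∣ ips P) :
    Polynomial.X ^ m ∣ P := by
  rw [Polynomial.X_pow_dvd_iff]
  rw [PowerSeries.X_pow_dvd_iff] at h
  intro d hd
  have := h d hd
  rw [ips_coeff] at this
  exact_mod_cast this

lemma binser_pow (n : ℕ) (hn : n ≠ 0) :
    (PowerSeries.binomialSeries ℚ (1 / (n:ℚ))) ^ n = 1 + PowerSeries.X := by
  have h : ∀ m : ℕ, (PowerSeries.binomialSeries ℚ (1 / (n:ℚ))) ^ m =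
      PowerSeries.binomialSeries ℚ ((m : ℚ) * (1 / (n:ℚ))) := by
    intro m
    induction m with
    | zero => simp
    | succ m ih =>
      rw [pow_succ, ih, ← PowerSeries.binomialSeries_add]
      congr 1
      push_cast
      ring
  rw [h]
  have hn' : (n:ℚ) ≠ 0 := by exact_mod_cast hn
  have : (n:ℚ) * (1 / (n:ℚ)) = ((1:ℕ):ℚ) := by field_simp; simp
  rw [this, PowerSeries.binomialSeries_nat, pow_one]

lemma pade_series (n k l : ℕ) (hn : n ≠ 0) :
    PowerSeries.X ^ (k + l + 1) ∣
      ips (padeQ n k l) * PowerSeries.binomialSeries ℚ (1 / (n:ℚ)) - ips (padeP n k l) := by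
  rw [PowerSeries.X_pow_dvd_iff]
  intro m hm
  rw [map_sub, PowerSeries.coeff_mul, ips_coeff, padeP_coeff n k l hn, sub_eq_zero]
  have hm' : m ≤ k + l := by omega
  have h := pade_identity (1 / (n:ℚ)) k l m hm'
  have h1 : ∀ ij ∈ antidiagonal m, PowerSeries.coeff ij.1 (ips (padeQ n k l)) *
      PowerSeries.coeff ij.2 (PowerSeries.binomialSeries ℚ (1 / (n:ℚ))) =
      (n:ℚ) ^ (2 * (k + l)) * ((((k + l - ij.1).choose k : ℚ) *
        Ring.choose ((k:ℚ) - 1 / (n:ℚ)) ij.1) * Ring.choose (1 / (n:ℚ)) ij.2) := by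
    intro ij hij
    rw [HasAntidiagonal.mem_antidiagonal] at hij
    rw [ips_coeff, padeQ_coeff n k l hn, PowerSeries.binomialSeries_coeff, smul_eq_mul, mul_one]
    split_ifs with hl
    · ring
    · rw [Nat.choose_eq_zero_of_lt (by omega : k + l - ij.1 < k)]
      simp
  rw [sum_congr rfl h1, ← mul_sum, h]
  split_ifs with hk
  · rfl
  · rw [Nat.choose_eq_zero_of_lt (by omega : k + l - m < l)]
    simp

open Polynomial in
lemma pade_K (n k l : ℕ) (hn : n ≠ 0) :
    (X : ℤ[X]) ^ (k + l + 1) ∣ (padeQ n k l) ^ n * (1 + X) - (padeP n k l) ^ n := by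
  apply ips_dvd
  rw [map_sub, map_mul, map_pow, map_pow, map_add, map_one, ips_X, ← binser_pow n hn, ← mul_pow]
  exact (pade_series n k l hn).trans (sub_dvd_pow_sub_pow _ _ _)

open Polynomial in
lemma pade_zero (n k l : ℕ) (hn : n ≠ 0) :
    (padeP n k l).eval 0 = (padeQ n k l).eval 0 ∧ (padeQ n k l).eval 0 ≠ 0 := by
  rw [← coeff_zero_eq_eval_zero, ← coeff_zero_eq_eval_zero]
  have h1 := padeP_coeff n k l hn 0
  have h2 := padeQ_coeff n k l hn 0
  have hn' : (n:ℚ) ≠ 0 := by exact_mod_cast hn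
  simp only [Nat.zero_le, if_true, Nat.sub_zero, Ring.choose_zero_right, mul_one] at h1 h2
  have h3 : (k + l).choose l = (k + l).choose k := by
    rw [Nat.choose_symm_add]
  constructor
  · have : ((padeP n k l).coeff 0 : ℚ) = ((padeQ n k l).coeff 0 : ℚ) := by rw [h1, h2, h3]
    exact_mod_cast this
  · have h4 : (((k + l).choose k : ℕ) : ℚ) ≠ 0 := by
      exact_mod_cast (Nat.choose_pos (by omega)).ne'
    have : ((padeQ n k l).coeff 0 : ℚ) ≠ 0 := by
      rw [h2]; positivity
    exact_mod_cast this

open Polynomial in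
lemma pade_G (n k l : ℕ) (hn : n ≠ 0) :
    (X : ℤ[X]) ^ (k + l + 1) ∣ ((padeQ n k l).comp ((1 + X) ^ n - 1)) * (1 + X)
      - (padeP n k l).comp ((1 + X) ^ n - 1) := by
  set τ : ℤ[X] := (1 + X) ^ n - 1 with hτ
  have hXτ : (X : ℤ[X]) ∣ τ := by
    rw [X_dvd_iff, coeff_zero_eq_eval_zero]
    simp [hτ]
  have hK : (X : ℤ[X]) ^ (k + l + 1) ∣ ((padeQ n k l).comp τ * (1 + X)) ^ n - ((padeP n k l).comp τ) ^ n := by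
    obtain ⟨R, hR⟩ := pade_K n k l hn
    have := congrArg (fun p => p.comp τ) hR
    simp only [sub_comp, mul_comp, pow_comp, add_comp, one_comp, X_comp] at this
    have h2 : 1 + τ = (1 + X) ^ n := by rw [hτ]; ring
    rw [mul_pow, ← h2, this]
    exact (pow_dvd_pow_of_dvd hXτ _).mul_right _
  rw [← Commute.mul_geom_sum₂ (Commute.all _ _)] at hK
  refine (Prime.pow_dvd_of_dvd_mul_right prime_X _ ?_ hK)
  rw [X_dvd_iff, coeff_zero_eq_eval_zero, eval_finsetSum]
  obtain ⟨e1, e2⟩ := pade_zero n k l hn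
  have hτ0 : τ.eval 0 = 0 := by simp [hτ]
  simp only [eval_mul, eval_pow, eval_comp, eval_add, eval_one, eval_X, hτ0, e1, add_zero, mul_one]
  rw [sum_congr rfl (g := fun _ => (eval 0 (padeQ n k l)) ^ (n - 1))]
  · simp only [sum_const, card_range, nsmul_eq_mul]
    apply mul_ne_zero
    · exact_mod_cast hn
    · exact pow_ne_zero _ e2
  · intro i hi
    rw [mem_range] at hi
    rw [← pow_add]
    congr 1
    omega

lemma inv_nat_not_int (n : ℕ) (hn : 2 ≤ n) (a : ℤ) : (1 / (n:ℚ)) ≠ a := by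
  intro h
  have hn' : (n:ℚ) ≠ 0 := by positivity
  rw [div_eq_iff hn'] at h
  have h1 : (1:ℤ) = a * n := by exact_mod_cast h
  have h2 : (n:ℤ) ∣ 1 := ⟨a, by linarith⟩
  have := Int.le_of_dvd one_pos h2
  omega

open Polynomial in
lemma pade_W (n k l : ℕ) (hn : 2 ≤ n) : ∃ c : ℤ, c ≠ 0 ∧
    padeP n k l * padeQ n k (l + 1) - padeP n k (l + 1) * padeQ n k l = C c * X ^ (k + l + 1) := by
  have hn0 : n ≠ 0 := by omega
  have hn' : (n:ℚ) ≠ 0 := by positivity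
  set W := padeP n k l * padeQ n k (l + 1) - padeP n k (l + 1) * padeQ n k l with hW
  have hdiv : (X : ℤ[X]) ^ (k + l + 1) ∣ W := by
    apply ips_dvd
    set f := PowerSeries.binomialSeries ℚ (1 / (n:ℚ))
    have : ips W = ips (padeQ n k l) * (ips (padeQ n k (l + 1)) * f - ips (padeP n k (l + 1)))
      - ips (padeQ n k (l + 1)) * (ips (padeQ n k l) * f - ips (padeP n k l)) := by
      rw [hW, map_sub, map_mul, map_mul]; ring
    rw [this]
    apply dvd_sub
    · apply Dvd.dvd.mul_left
      exact (pow_dvd_pow _ (by omega)).trans (pade_series n k (l + 1) hn0)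
    · apply Dvd.dvd.mul_left
      exact pade_series n k l hn0
  have hdeg : W.natDegree ≤ k + l + 1 := by
    apply (natDegree_sub_le _ _).trans
    apply max_le
    · exact natDegree_mul_le.trans (by
        have := padeP_natDegree n k l
        have := padeQ_natDegree n k (l + 1)
        omega)
    · exact natDegree_mul_le.trans (by
        have := padeP_natDegree n k (l + 1)
        have := padeQ_natDegree n k l
        omega)
  have hcoef : W.coeff (k + l + 1) = (padeP n k l).coeff k * (padeQ n k (l + 1)).coeff (l + 1) := by
    rw [hW, coeff_sub, add_assoc, coeff_mul_add_eq_of_natDegree_le (padeP_natDegree n k l) (padeQ_natDegree n k (l + 1))]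
    rw [coeff_eq_zero_of_natDegree_lt (p := padeP n k (l + 1) * padeQ n k l), sub_zero]
    apply lt_of_le_of_lt natDegree_mul_le
    have := padeP_natDegree n k (l + 1)
    have := padeQ_natDegree n k l
    omega
  refine ⟨W.coeff (k + l + 1), ?_, ?_⟩
  · rw [hcoef]
    apply mul_ne_zero
    · have h := padeP_coeff n k l hn0 k
      rw [if_pos le_rfl] at h
      have h2 : Ring.choose (1 / (n:ℚ) + l) k ≠ 0 := by
        apply rchoose_ne_zero
        intro i hi
        apply inv_nat_not_int n hn (i - l)
        push_cast; linarith
      have h3 : (((k + l - k).choose l : ℕ) : ℚ) ≠ 0 := by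
        rw [Nat.add_sub_cancel_left]; simp
      have : ((padeP n k l).coeff k : ℚ) ≠ 0 := by
        rw [h]; positivity
      exact_mod_cast this
    · have h := padeQ_coeff n k (l + 1) hn0 (l + 1)
      rw [if_pos le_rfl] at h
      have h2 : Ring.choose ((k:ℚ) - 1 / (n:ℚ)) (l + 1) ≠ 0 := by
        apply rchoose_ne_zero
        intro i hi
        apply inv_nat_not_int n hn (k - i)
        push_cast; linarith
      have h3 : (((k + (l + 1) - (l + 1)).choose k : ℕ) : ℚ) ≠ 0 := by
        rw [Nat.add_sub_cancel]; simp
      have : ((padeQ n k (l + 1)).coeff (l + 1) : ℚ) ≠ 0 := by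
        rw [h]; positivity
      exact_mod_cast this
  · ext d
    rw [coeff_C_mul, coeff_X_pow]
    rcases lt_trichotomy d (k + l + 1) with h | h | h
    · rw [if_neg (by omega), mul_zero]
      exact (X_pow_dvd_iff.1 hdiv) d h
    · simp [h]
    · rw [if_neg (by omega), mul_zero]
      exact coeff_eq_zero_of_natDegree_lt (by omega)


/-- homogenization of an integer polynomial, evaluated at integers -/
def homog (l : ℕ) (Q : Polynomial ℤ) (x y : ℤ) : ℤ :=
  ∑ j ∈ range (l + 1), Q.coeff j * x ^ j * y ^ (l - j)

lemma homog_eval {R : Type*} [CommRing R] (l : ℕ) (Q : Polynomial ℤ) (hQ : Q.natDegree ≤ l)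
    (x y : ℤ) (t : R) (h : (x : R) = y * t) :
    ((homog l Q x y : ℤ) : R) = (y : R) ^ l * Q.eval₂ (Int.castRingHom R) t := by
  rw [Polynomial.eval₂_eq_sum_range' _ (Nat.lt_succ_of_le hQ), homog, mul_sum]
  push_cast
  apply sum_congr rfl
  intro j hj
  rw [mem_range] at hj
  have : (y : R) ^ l = (y : R) ^ j * (y:R) ^ (l - j) := by
    rw [← pow_add]; congr 1; omega
  rw [h, this, mul_pow, eq_intCast]
  ring

lemma homog_dvd (k l : ℕ) (P : Polynomial ℤ) (hP : P.natDegree ≤ k) (x y : ℤ) :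
    y ^ (l - k) ∣ homog l P x y := by
  apply dvd_sum
  intro j hj
  by_cases h : j ≤ k
  · exact (pow_dvd_pow y (by omega)).mul_left _
  · rw [Polynomial.coeff_eq_zero_of_natDegree_lt (by omega)]
    simp

lemma homog_abs_le (k l : ℕ) (hkl : k ≤ l) (P : Polynomial ℤ) (hP : P.natDegree ≤ k) (x y B : ℤ)
    (hB : ∀ j, |P.coeff j| ≤ B) (hxy : |y| ≤ |x|) :
    |homog l P x y| ≤ (l + 1) * (B * (|x| ^ k * |y| ^ (l - k))) := by
  have hB0 : 0 ≤ B := (abs_nonneg _).trans (hB 0)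
  refine (abs_sum_le_sum_abs _ _).trans ?_
  have : ∀ j ∈ range (l + 1), |P.coeff j * x ^ j * y ^ (l - j)| ≤ B * (|x| ^ k * |y| ^ (l - k)) := by
    intro j hj
    by_cases h : j ≤ k
    · rw [mul_assoc, abs_mul, abs_mul, abs_pow, abs_pow]
      have e : |x| ^ j * |y| ^ (l - j) ≤ |x| ^ k * |y| ^ (l - k) := by
        have e1 : l - j = (l - k) + (k - j) := by omega
        have e2 : |x| ^ k = |x| ^ j * |x| ^ (k - j) := by
          rw [← pow_add]; congr 1; omega
        rw [e1, pow_add, e2]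
        have : |y| ^ (k - j) ≤ |x| ^ (k - j) := by gcongr
        calc |x| ^ j * (|y| ^ (l - k) * |y| ^ (k - j))
            ≤ |x| ^ j * (|y| ^ (l - k) * |x| ^ (k - j)) := by gcongr
          _ = _ := by ring
      have := hB j
      gcongr
    · rw [Polynomial.coeff_eq_zero_of_natDegree_lt (by omega)]
      simp only [zero_mul, abs_zero]
      positivity
  refine (sum_le_sum this).trans ?_
  simp

/-- the auxiliary integer -/
noncomputable def DD (n k l : ℕ) (x1 y1 z1 v1 z2 v2 : ℤ) : ℤ :=
  homog l (padeQ n k l) x1 y1 * (z1 * v2) - homog l (padeP n k l) x1 y1 * (v1 * z2)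

lemma DD_ne_zero (n k l : ℕ) (hn : 2 ≤ n) (hkl : k ≤ l) (x1 y1 z1 v1 z2 v2 : ℤ) (hx1 : x1 ≠ 0) (hy1 : y1 ≠ 0)
    (hv1 : v1 ≠ 0) (hz2 : z2 ≠ 0) :
    DD n k l x1 y1 z1 v1 z2 v2 ≠ 0 ∨ DD n k (l + 1) x1 y1 z1 v1 z2 v2 ≠ 0 := by
  by_contra! hcon
  obtain ⟨h1, h2⟩ := hcon
  have hy : (y1 : ℚ) ≠ 0 := by exact_mod_cast hy1
  have hx : (x1 : ℚ) ≠ 0 := by exact_mod_cast hx1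
  have hv : (v1 : ℚ) ≠ 0 := by exact_mod_cast hv1
  have hz : (z2 : ℚ) ≠ 0 := by exact_mod_cast hz2
  set t : ℚ := x1 / y1 with ht
  have hxt : (x1 : ℚ) = y1 * t := by rw [ht]; field_simp
  have ht0 : t ≠ 0 := div_ne_zero hx hy
  have key : ∀ m, k ≤ m → DD n k m x1 y1 z1 v1 z2 v2 = 0 →
      (padeQ n k m).eval₂ (Int.castRingHom ℚ) t * (z1 * v2) =
      (padeP n k m).eval₂ (Int.castRingHom ℚ) t * (v1 * z2) := by
    intro m hm h
    have h' : ((DD n k m x1 y1 z1 v1 z2 v2 : ℤ) : ℚ) = 0 := by rw [h]; simp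
    rw [DD] at h'
    push_cast at h'
    rw [homog_eval m _ (padeQ_natDegree n k m) x1 y1 t hxt,
      homog_eval m _ ((padeP_natDegree n k m).trans hm) x1 y1 t hxt] at h'
    have h3 : (y1:ℚ) ^ m ≠ 0 := pow_ne_zero _ hy
    apply mul_left_cancel₀ h3
    linarith
  have k1 := key l hkl h1
  have k2 := key (l + 1) (by omega) h2
  obtain ⟨c, hc, hW⟩ := pade_W n k l hn
  have hW' := congrArg (Polynomial.eval₂ (Int.castRingHom ℚ) t) hW
  simp only [Polynomial.eval₂_sub, Polynomial.eval₂_mul, Polynomial.eval₂_C, Polynomial.eval₂_pow,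
    Polynomial.eval₂_X] at hW'
  have hc' : ((Int.castRingHom ℚ) c : ℚ) ≠ 0 := by simpa using hc
  have h5 : (Int.castRingHom ℚ) c * t ^ (k + l + 1) ≠ 0 := mul_ne_zero hc' (pow_ne_zero _ ht0)
  apply h5
  rw [← hW']
  have h6 : (v1 : ℚ) * z2 ≠ 0 := mul_ne_zero hv hz
  apply mul_right_cancel₀ h6
  linear_combination (Polynomial.eval₂ (Int.castRingHom ℚ) t (padeQ n k l)) * k2
    - (Polynomial.eval₂ (Int.castRingHom ℚ) t (padeQ n k (l + 1))) * k1

lemma one_add_pow_aux {R : Type*} [CommRing R] (s : R) (n : ℕ) :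
    ∃ w, (1 + s) ^ n - 1 = s * (n + s * w) := by
  induction n with
  | zero => exact ⟨0, by simp⟩
  | succ n ih =>
    obtain ⟨w, hw⟩ := ih
    refine ⟨w + n + s * w, ?_⟩
    push_cast
    rw [pow_succ]
    linear_combination (1 + s) * hw

lemma padic_unit (p : ℕ) [Fact p.Prime] (a : ℤ) (h : ¬ (p : ℤ) ∣ a) : IsUnit (a : ℤ_[p]) := by
  rw [PadicInt.isUnit_iff]
  have h1 := PadicInt.norm_int_lt_one_iff_dvd (p := p) a
  have h2 := PadicInt.norm_le_one (a : ℤ_[p])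
  rcases lt_or_eq_of_le h2 with h3 | h3
  · exact absurd (h1.1 h3) h
  · exact h3

lemma local_a (p n k l e M : ℕ) (hp : p.Prime) (hn : 2 ≤ n) (hkl : k ≤ l)
    (x1 y1 z1 v1 x2 y2 z2 v2 b : ℤ)
    (hb1 : y1 = b * v1 ^ n) (hb2 : y2 = b * v2 ^ n) (h1 : x1 + y1 = z1 ^ n) (h2 : x2 + y2 = z2 ^ n)
    (hy1 : ¬ (p : ℤ) ∣ y1) (hy2 : ¬ (p : ℤ) ∣ y2) (hx2 : (p : ℤ) ∣ x2)
    (he1 : (p : ℤ) ^ e ∣ x1) (he2 : (p : ℤ) ^ e ∣ x2) (hM : (p : ℤ) ^ M ∣ x2)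
    (hMe : M ≤ e * (k + l + 1)) (hmod : ((n * p : ℕ) : ℤ) ∣ z1 * v2 - v1 * z2) :
    (p : ℤ) ^ M ∣ (n : ℤ) ^ (k + l + 1) * DD n k l x1 y1 z1 v1 z2 v2 := by
  have : Fact p.Prime := ⟨hp⟩
  have hpi : Prime (p : ℤ) := Nat.prime_iff_prime_int.1 hp
  have hv1 : ¬ (p : ℤ) ∣ v1 := fun h => hy1 (by
    rw [hb1]; exact ((dvd_pow h (by omega))).mul_left _)
  have hb : ¬ (p : ℤ) ∣ b := fun h => hy1 (by rw [hb1]; exact h.mul_right _)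
  have hz2 : ¬ (p : ℤ) ∣ z2 := fun h => hy2 (by
    have : (p : ℤ) ∣ z2 ^ n := dvd_pow h (by omega)
    rw [← h2] at this
    exact (dvd_add_right hx2).1 this)
  have uy1 := padic_unit p y1 hy1
  have uy2 := padic_unit p y2 hy2
  have uv1 := padic_unit p v1 hv1
  have uz2 := padic_unit p z2 hz2
  have ub := padic_unit p b hb
  obtain ⟨t1, ht1⟩ : ∃ t1 : ℤ_[p], (x1 : ℤ_[p]) = y1 * t1 := by
    obtain ⟨u, hu⟩ := uy1.exists_right_inv
    exact ⟨u * x1, by rw [← mul_assoc, hu, one_mul]⟩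
  obtain ⟨t2, ht2⟩ : ∃ t2 : ℤ_[p], (x2 : ℤ_[p]) = y2 * t2 := by
    obtain ⟨u, hu⟩ := uy2.exists_right_inv
    exact ⟨u * x2, by rw [← mul_assoc, hu, one_mul]⟩
  obtain ⟨s, hs⟩ : ∃ s : ℤ_[p], ((z1 * v2 - v1 * z2 : ℤ) : ℤ_[p]) = (v1 * z2) * s := by
    obtain ⟨u, hu⟩ := (uv1.mul uz2).exists_right_inv
    exact ⟨u * ((z1 * v2 - v1 * z2 : ℤ) : ℤ_[p]), by rw [← mul_assoc, hu, one_mul]⟩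
  have cast_dvd : ∀ (m : ℕ) (a : ℤ), (p : ℤ) ^ m ∣ a → (p : ℤ_[p]) ^ m ∣ (a : ℤ_[p]) := by
    intro m a h
    obtain ⟨c, rfl⟩ := h
    exact ⟨(c : ℤ_[p]), by push_cast; ring⟩
  have dt1 : (p : ℤ_[p]) ^ e ∣ t1 := by
    have := cast_dvd e x1 he1
    rw [ht1] at this
    exact (uy1.dvd_mul_left).1 this
  have dt2 : (p : ℤ_[p]) ^ e ∣ t2 := by
    have := cast_dvd e x2 he2
    rw [ht2] at this
    exact (uy2.dvd_mul_left).1 this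
  have dtM : (p : ℤ_[p]) ^ M ∣ t2 := by
    have := cast_dvd M x2 hM
    rw [ht2] at this
    exact (uy2.dvd_mul_left).1 this
  have hb1' : (y1 : ℤ_[p]) = b * v1 ^ n := by rw [hb1]; push_cast; ring
  have hb2' : (y2 : ℤ_[p]) = b * v2 ^ n := by rw [hb2]; push_cast; ring
  have h1' : (x1 : ℤ_[p]) + y1 = z1 ^ n := by exact_mod_cast congrArg (fun a : ℤ => (a : ℤ_[p])) h1
  have h2' : (x2 : ℤ_[p]) + y2 = z2 ^ n := by exact_mod_cast congrArg (fun a : ℤ => (a : ℤ_[p])) h2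
  push_cast at hs
  have hs' : (z1 : ℤ_[p]) * v2 = v1 * z2 * (1 + s) := by linear_combination hs
  have hs1 : (z1 : ℤ_[p]) ^ n * v2 ^ n = v1 ^ n * z2 ^ n * (1 + s) ^ n := by
    rw [← mul_pow, hs', mul_pow, mul_pow]
  have hrel : (1 + s) ^ n * (1 + t2) = 1 + t1 := by
    apply (uy1.mul uy2).mul_left_cancel
    have e1 : (z1 : ℤ_[p]) ^ n = y1 * (1 + t1) := by rw [← h1', ht1]; ring
    have e2 : (z2 : ℤ_[p]) ^ n = y2 * (1 + t2) := by rw [← h2', ht2]; ring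
    rw [e1, e2] at hs1
    have e3 : (y1 * (1 + t1)) * (b * v2 ^ n) = (b * v1 ^ n) * (y2 * (1 + t2)) * (1 + s) ^ n := by
      linear_combination (b : ℤ_[p]) * hs1
    rw [← hb1', ← hb2'] at e3
    linear_combination - e3
  set τ : ℤ_[p] := (1 + s) ^ n - 1 with hτ
  have hτ1 : t1 - τ = (1 + s) ^ n * t2 := by rw [hτ]; linear_combination - hrel
  have dτM : (p : ℤ_[p]) ^ M ∣ t1 - τ := by rw [hτ1]; exact dtM.mul_left _
  have dτ : (p : ℤ_[p]) ^ e ∣ τ := by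
    have : τ = t1 - (1 + s) ^ n * t2 := by rw [← hτ1]; ring
    rw [this]
    exact dvd_sub dt1 (dt2.mul_left _)
  obtain ⟨r, hr⟩ : ∃ r, s = n * p * r := by
    obtain ⟨c, hc⟩ := hmod
    have : ((n * p : ℤ_[p])) ∣ (v1 * z2) * s := by
      rw [← hs]
      refine ⟨(c : ℤ_[p]), ?_⟩
      have := congrArg (fun a : ℤ => (a : ℤ_[p])) hc
      push_cast at this
      exact this
    exact ((uv1.mul uz2).dvd_mul_left).1 this
  have dns : (p : ℤ_[p]) ^ e ∣ n * s := by
    obtain ⟨w, hw⟩ := one_add_pow_aux s n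
    rw [← hτ] at hw
    have e1 : τ = (n * s) * (1 + p * (r * w)) := by
      rw [hw]
      have : s * (n + s * w) = s * (n + (n * p * r) * w) := by rw [← hr]
      rw [this]; ring
    have hu : IsUnit (1 + (p : ℤ_[p]) * (r * w)) := by
      have hm : (p : ℤ_[p]) * (r * w) ∈ IsLocalRing.maximalIdeal ℤ_[p] := by
        apply Ideal.mul_mem_right
        rw [IsLocalRing.mem_maximalIdeal]
        exact PadicInt.p_nonunit
      by_contra hnu
      have h3 : 1 + (p : ℤ_[p]) * (r * w) ∈ IsLocalRing.maximalIdeal ℤ_[p] := hnu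
      have h4 := Ideal.sub_mem _ h3 hm
      rw [add_sub_cancel_right] at h4
      exact (IsLocalRing.mem_maximalIdeal _ ).1 h4 isUnit_one
    rw [e1] at dτ
    exact (hu.dvd_mul_right).1 dτ
  rw [← PadicInt.pow_p_dvd_int_iff]
  set φ := Int.castRingHom ℤ_[p]
  have hD : ((DD n k l x1 y1 z1 v1 z2 v2 : ℤ) : ℤ_[p]) = (y1 ^ l * (v1 * z2)) *
      ((padeQ n k l).eval₂ φ t1 * (1 + s) - (padeP n k l).eval₂ φ t1) := by
    rw [DD]
    push_cast
    rw [homog_eval l _ (padeQ_natDegree n k l) x1 y1 t1 ht1,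
      homog_eval l _ ((padeP_natDegree n k l).trans hkl) x1 y1 t1 ht1, hs']
    ring
  have hG : s ^ (k + l + 1) ∣ (padeQ n k l).eval₂ φ τ * (1 + s) - (padeP n k l).eval₂ φ τ := by
    obtain ⟨R, hR⟩ := pade_G n k l (by omega)
    have := congrArg (Polynomial.eval₂ φ s) hR
    simp only [Polynomial.eval₂_sub, Polynomial.eval₂_mul, Polynomial.eval₂_pow, Polynomial.eval₂_add,
      Polynomial.eval₂_one, Polynomial.eval₂_X, Polynomial.eval₂_comp] at this
    rw [← hτ] at this
    rw [this]
    exact dvd_mul_right _ _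
  have sub_dvd : ∀ Q : Polynomial ℤ, t1 - τ ∣ Q.eval₂ φ t1 - Q.eval₂ φ τ := by
    intro Q
    rw [← Polynomial.eval_map, ← Polynomial.eval_map]
    exact Polynomial.sub_dvd_eval_sub _ _ _
  push_cast
  rw [hD]
  have e1 : (n : ℤ_[p]) ^ (k + l + 1) * ((y1 ^ l * (v1 * z2)) *
      ((padeQ n k l).eval₂ φ t1 * (1 + s) - (padeP n k l).eval₂ φ t1)) =
      (y1 ^ l * (v1 * z2)) * ((n : ℤ_[p]) ^ (k + l + 1) *
      ((padeQ n k l).eval₂ φ τ * (1 + s) - (padeP n k l).eval₂ φ τ) +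
      (n : ℤ_[p]) ^ (k + l + 1) * (((padeQ n k l).eval₂ φ t1 - (padeQ n k l).eval₂ φ τ) * (1 + s) -
       ((padeP n k l).eval₂ φ t1 - (padeP n k l).eval₂ φ τ))) := by ring
  rw [e1]
  apply Dvd.dvd.mul_left
  apply dvd_add
  · have h7 : ((p : ℤ_[p]) ^ e) ^ (k + l + 1) ∣ (n * s) ^ (k + l + 1) := pow_dvd_pow_of_dvd dns _
    rw [mul_pow, ← pow_mul] at h7
    exact (pow_dvd_pow _ hMe).trans (h7.trans (mul_dvd_mul_left _ hG))
  · apply Dvd.dvd.mul_left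
    apply dvd_sub
    · exact (dτM.trans (sub_dvd _)).mul_right _
    · exact dτM.trans (sub_dvd _)

lemma local_c (p n k l M : ℕ) (x1 y1 z1 v1 z2 v2 : ℤ)
    (h1 : (p : ℤ) ^ M ∣ v2) (h2 : (p : ℤ) ^ M ∣ y1 ^ (l - k)) :
    (p : ℤ) ^ M ∣ (n : ℤ) ^ (k + l + 1) * DD n k l x1 y1 z1 v1 z2 v2 := by
  apply Dvd.dvd.mul_left
  rw [DD]
  apply dvd_sub
  · exact (h1.mul_left _).mul_left _
  · exact (h2.trans (homog_dvd k l _ (padeP_natDegree n k l) x1 y1)).mul_right _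


lemma real_aux (n s X1 X2 Y1 Y2 ε lz1 lv1 lz2 lv2 l LE K σ : ℝ) (hn : 2 ≤ n) (hs : 20 ≤ s)
    (hX1 : 0 < X1) (hY1 : 0 ≤ Y1) (hYX : Y1 ≤ X1) (hX2 : 4 * s * X1 ≤ X2)
    (hX2' : X2 ≤ 4 * (s + 1) * X1) (hY2 : Y2 * X1 ≤ X2 * (Y1 + ε * X1)) (hε0 : 0 ≤ ε)
    (hε : ε ≤ 1 / 100) (hz1 : n * lz1 ≤ X1 + 1) (hv2 : n * lv2 ≤ Y2) (hv1 : n * lv1 ≤ Y1)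
    (hz2 : n * lz2 ≤ X2 + 1) (hl : l ≤ 3 * s + 1)
    (hlow : 4 * s * X1 + 4 * s * (Y1 / n) - 8 * s * n * σ - 8 * s * ε * X1 ≤ LE)
    (hup : LE ≤ K * s + l * X1 + lz1 + lv2 ∨ LE ≤ K * s + s * X1 + (l - s) * Y1 + lv1 + lz2) :
    X1 ≤ 2 * (K + 8 * n * σ + 1) := by
  have hn0 : 0 < n := by linarith
  set i := 1 / n with hi
  have hi0 : 0 < i := by positivity
  have hi2 : i ≤ 1 / 2 := by rw [hi]; exact one_div_le_one_div_of_le (by norm_num) hn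
  have hin : ∀ a b : ℝ, n * a ≤ b → a ≤ b * i := by
    intro a b h
    rw [hi, mul_one_div, le_div_iff₀ hn0]; linarith
  have hYn : Y1 / n = Y1 * i := by rw [hi]; ring
  rw [hYn] at hlow
  have hY2' : Y2 ≤ 4 * (s + 1) * (Y1 + ε * X1) := by
    have h1 : X2 * (Y1 + ε * X1) ≤ (4 * (s + 1) * X1) * (Y1 + ε * X1) := by gcongr
    have h2 : Y2 * X1 ≤ (4 * (s + 1) * (Y1 + ε * X1)) * X1 := by linarith
    exact le_of_mul_le_mul_right h2 hX1
  have b1 := hin _ _ hz1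
  have b2 := hin _ _ hv2
  have b3 := hin _ _ hv1
  have b4 := hin _ _ hz2
  have hs0 : 0 < s := by linarith
  have hsX : 0 < s * X1 := by positivity
  have hsX20 : 20 * X1 ≤ s * X1 := by gcongr
  have hεsX : s * ε * X1 ≤ s * X1 / 100 := by
    have : s * ε * X1 ≤ s * (1 / 100) * X1 := by gcongr
    linarith
  have hεX : ε * X1 ≤ X1 / 100 := by
    have : ε * X1 ≤ (1 / 100) * X1 := by gcongr
    linarith
  have hiX : X1 * i ≤ X1 / 2 := by
    have : X1 * i ≤ X1 * (1 / 2) := by gcongr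
    linarith
  have hiY : Y1 * i ≤ X1 / 2 := by
    have : Y1 * i ≤ X1 * i := by gcongr
    linarith
  have hlX : l * X1 ≤ (3 * s + 1) * X1 := by gcongr
  suffices hfin : s * (X1 / 2) ≤ s * (K + 8 * n * σ + 1) by
    have := le_of_mul_le_mul_left hfin hs0
    linarith
  rcases hup with hup | hup
  · have b2' : lv2 ≤ 4 * s * (Y1 * i) + 4 * (Y1 * i) + 4 * (s + 1) * (ε * X1) * (1 / 2) := by
      have h1 : Y2 * i ≤ (4 * (s + 1) * (Y1 + ε * X1)) * i := by gcongr
      have h2 : 4 * (s + 1) * (ε * X1) * i ≤ 4 * (s + 1) * (ε * X1) * (1 / 2) := by gcongr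
      nlinarith
    nlinarith
  · have b4' : lz2 ≤ 4 * s * (X1 * i) + 4 * (X1 * i) + 1 / 2 := by
      have h1 : (X2 + 1) * i ≤ (4 * (s + 1) * X1 + 1) * i := by gcongr
      nlinarith
    have b5 : (l - s) * Y1 ≤ (2 * s + 1) * Y1 := by
      have : l - s ≤ 2 * s + 1 := by linarith
      gcongr
    have b6 : 4 * s * ((X1 - Y1) * i) ≤ 2 * s * (X1 - Y1) := by
      have h0 : 0 ≤ X1 - Y1 := by linarith
      have : (X1 - Y1) * i ≤ (X1 - Y1) * (1 / 2) := by gcongr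
      have h3 : s * ((X1 - Y1) * i) ≤ s * ((X1 - Y1) * (1 / 2)) := by gcongr
      linarith
    have b7 : 4 * s * ((X1 - Y1) * i) = 4 * s * (X1 * i) - 4 * s * (Y1 * i) := by ring
    have b8 : (2 * s + 1) * Y1 = 2 * (s * Y1) + Y1 := by ring
    have b9 : 2 * s * (X1 - Y1) = 2 * (s * X1) - 2 * (s * Y1) := by ring
    have b10 : s * (K + 8 * n * σ + 1) = K * s + 8 * s * n * σ + s := by ring
    rw [b10]
    rw [b7, b9] at b6
    rw [b8] at b5
    linarith

lemma sunit_log (S : Finset ℕ) (x : ℤ) (hx : IsSUnit S x) :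
    ∑ p ∈ S, (x.natAbs.factorization p : ℝ) * Real.log p = Real.log |(x:ℝ)| := by
  obtain ⟨hx0, hxp⟩ := hx
  have h0 : x.natAbs ≠ 0 := Int.natAbs_ne_zero.2 hx0
  have h1 := Nat.prod_factorization_pow_eq_self h0
  rw [Finsupp.prod_of_support_subset (s := S) _ _ _ (by simp)] at h1
  · have h2 : |(x:ℝ)| = ((x.natAbs : ℕ) : ℝ) := by
      rw [Nat.cast_natAbs]; simp
    rw [h2]
    conv_rhs => rw [← h1]
    push_cast
    rw [Real.log_prod]
    · simp
    · intro p hp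
      by_cases hp0 : p = 0
      · subst hp0
        simp
      · positivity
  · intro p hp
    have hpp : p.Prime := Nat.prime_of_mem_primeFactors hp
    exact hxp p hpp (Int.natCast_dvd.2 (Nat.dvd_of_mem_primeFactors hp))

lemma log_lower (S : Finset ℕ) (hS : ∀ p ∈ S, p.Prime) (e : ℕ → ℕ) (E : ℤ) (hE : E ≠ 0)
    (h : ∀ p ∈ S, (p : ℤ) ^ e p ∣ E) :
    ∑ p ∈ S, (e p : ℝ) * Real.log p ≤ Real.log |(E:ℝ)| := by
  have h1 : (∏ p ∈ S, p ^ e p) ∣ E.natAbs := by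
    apply Finset.prod_dvd_of_isRelPrime
    · intro p hp q hq hpq
      apply Nat.coprime_iff_isRelPrime.1
      exact Nat.Coprime.pow _ _ ((Nat.coprime_primes (hS p hp) (hS q hq)).2 hpq)
    · intro p hp
      have := h p hp
      rw [← Int.natCast_dvd]
      exact_mod_cast this
  have h2 := Nat.le_of_dvd (Int.natAbs_pos.2 hE) h1
  have h3 : |(E:ℝ)| = ((E.natAbs : ℕ) : ℝ) := by
    rw [Nat.cast_natAbs]; simp
  have hpos : 0 < ∏ p ∈ S, p ^ e p := Finset.prod_pos (fun p hp => pow_pos (hS p hp).pos _)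
  have h4 : Real.log ((∏ p ∈ S, p ^ e p : ℕ) : ℝ) ≤ Real.log |(E:ℝ)| := by
    rw [h3]
    apply Real.log_le_log
    · exact_mod_cast hpos
    · exact_mod_cast h2
  refine le_trans (le_of_eq ?_) h4
  push_cast
  rw [Real.log_prod]
  · simp
  · intro p hp
    have := (hS p hp).pos
    positivity

/-- constant in the size estimate -/
noncomputable def KK (n : ℕ) : ℝ := 6 + 6 * Real.log n + 6 * Real.log (8 * n ^ 2)

lemma DD_upper (n s l : ℕ) (hn : 2 ≤ n) (hs : 1 ≤ s) (hl1 : 3 * s ≤ l) (hl2 : l ≤ 3 * s + 1)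
    (x1 y1 z1 v1 z2 v2 : ℤ) (hx1 : x1 ≠ 0) (hy1 : y1 ≠ 0) (hz1 : z1 ≠ 0) (hv1 : v1 ≠ 0)
    (hz2 : z2 ≠ 0) (hv2 : v2 ≠ 0) (hxy : |y1| ≤ |x1|) (hD : DD n s l x1 y1 z1 v1 z2 v2 ≠ 0) :
    Real.log |(((n : ℤ) ^ (s + l + 1) * DD n s l x1 y1 z1 v1 z2 v2 : ℤ) : ℝ)| ≤
      KK n * s + l * Real.log |(x1:ℝ)| + Real.log |(z1:ℝ)| + Real.log |(v2:ℝ)| ∨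
    Real.log |(((n : ℤ) ^ (s + l + 1) * DD n s l x1 y1 z1 v1 z2 v2 : ℤ) : ℝ)| ≤
      KK n * s + s * Real.log |(x1:ℝ)| + ((l:ℝ) - s) * Real.log |(y1:ℝ)| + Real.log |(v1:ℝ)| +
        Real.log |(z2:ℝ)| := by
  set B : ℤ := (8 * n ^ 2) ^ (s + l) with hB
  have hQ := homog_abs_le l l le_rfl _ (padeQ_natDegree n s l) x1 y1 B
    (padeQ_bound n s l (by omega)) hxy
  have hP := homog_abs_le s l (by omega) _ (padeP_natDegree n s l) x1 y1 B
    (padeP_bound n s l (by omega)) hxy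
  rw [Nat.sub_self, pow_zero, mul_one] at hQ
  have hn0 : (0:ℝ) < n := by positivity
  have hDa : |DD n s l x1 y1 z1 v1 z2 v2| ≤
      ((l + 1) * (B * |x1| ^ l)) * (|z1| * |v2|) +
      ((l + 1) * (B * (|x1| ^ s * |y1| ^ (l - s)))) * (|v1| * |z2|) := by
    rw [DD]
    refine (abs_sub _ _).trans ?_
    rw [abs_mul, abs_mul, abs_mul, abs_mul]
    gcongr
  have hx1' : 0 < |(x1:ℝ)| := by simpa using hx1
  have hy1' : 0 < |(y1:ℝ)| := by simpa using hy1
  have hz1' : 0 < |(z1:ℝ)| := by simpa using hz1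
  have hz2' : 0 < |(z2:ℝ)| := by simpa using hz2
  have hv1' : 0 < |(v1:ℝ)| := by simpa using hv1
  have hv2' : 0 < |(v2:ℝ)| := by simpa using hv2
  have hDr : |((DD n s l x1 y1 z1 v1 z2 v2 : ℤ) : ℝ)| ≤
      (((l:ℝ) + 1) * ((8 * n ^ 2) ^ (s + l) * |(x1:ℝ)| ^ l)) * (|(z1:ℝ)| * |(v2:ℝ)|) +
      (((l:ℝ) + 1) * ((8 * n ^ 2) ^ (s + l) * (|(x1:ℝ)| ^ s * |(y1:ℝ)| ^ (l - s)))) *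
        (|(v1:ℝ)| * |(z2:ℝ)|) := by
    rw [hB] at hDa
    exact_mod_cast hDa
  have hDpos : 0 < |((DD n s l x1 y1 z1 v1 z2 v2 : ℤ) : ℝ)| := by
    rw [abs_pos]; exact_mod_cast hD
  have hL : Real.log |(((n : ℤ) ^ (s + l + 1) * DD n s l x1 y1 z1 v1 z2 v2 : ℤ) : ℝ)| =
      (s + l + 1) * Real.log n + Real.log |((DD n s l x1 y1 z1 v1 z2 v2 : ℤ) : ℝ)| := by
    push_cast
    rw [abs_mul, Real.log_mul, abs_of_nonneg (by positivity : (0:ℝ) ≤ n ^ (s + l + 1)), Real.log_pow]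
    · push_cast; ring
    · rw [abs_of_nonneg (by positivity : (0:ℝ) ≤ n ^ (s + l + 1))]; positivity
    · exact hDpos.ne'
  rw [hL]
  have hlogn : 0 ≤ Real.log n := Real.log_natCast_nonneg n
  have hlog8 : 0 ≤ Real.log (8 * (n:ℝ) ^ 2) := by
    apply Real.log_nonneg
    have : (1:ℝ) ≤ n := by exact_mod_cast (by omega : 1 ≤ n)
    nlinarith
  have hlog2 : Real.log 2 ≤ 1 := by
    have := Real.log_le_sub_one_of_pos (show (0:ℝ) < 2 by norm_num)
    linarith
  have hlogl : Real.log ((l:ℝ) + 1) ≤ l := by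
    have := Real.log_le_sub_one_of_pos (show (0:ℝ) < (l:ℝ) + 1 by positivity)
    linarith
  have hlR : (l:ℝ) ≤ 3 * s + 1 := by exact_mod_cast hl2
  have hsR : (1:ℝ) ≤ s := by exact_mod_cast hs
  have hK : ((s:ℝ) + l + 1) * Real.log n + (Real.log 2 + Real.log ((l:ℝ) + 1) +
      (s + l) * Real.log (8 * (n:ℝ) ^ 2)) ≤ KK n * s := by
    rw [KK]
    have e1 : ((s:ℝ) + l + 1) * Real.log n ≤ (6 * s) * Real.log n := by
      apply mul_le_mul_of_nonneg_right _ hlogn; linarith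
    have e2 : ((s:ℝ) + l) * Real.log (8 * (n:ℝ) ^ 2) ≤ (6 * s) * Real.log (8 * (n:ℝ) ^ 2) := by
      apply mul_le_mul_of_nonneg_right _ hlog8; linarith
    nlinarith
  have h8 : (8 * (n:ℝ) ^ 2) ≠ 0 := by positivity
  set T1 := (((l:ℝ) + 1) * ((8 * n ^ 2) ^ (s + l) * |(x1:ℝ)| ^ l)) * (|(z1:ℝ)| * |(v2:ℝ)|) with hT1
  set T2 := (((l:ℝ) + 1) * ((8 * n ^ 2) ^ (s + l) * (|(x1:ℝ)| ^ s * |(y1:ℝ)| ^ (l - s)))) *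
        (|(v1:ℝ)| * |(z2:ℝ)|) with hT2
  have hT1pos : 0 < T1 := by positivity
  have hT2pos : 0 < T2 := by positivity
  have logT1 : Real.log T1 = Real.log ((l:ℝ) + 1) + (s + l) * Real.log (8 * (n:ℝ) ^ 2) +
      l * Real.log |(x1:ℝ)| + Real.log |(z1:ℝ)| + Real.log |(v2:ℝ)| := by
    rw [hT1, Real.log_mul (by positivity) (by positivity), Real.log_mul (by positivity) (by positivity),
      Real.log_mul (by positivity) (by positivity), Real.log_mul (by positivity) (by positivity),
      Real.log_pow, Real.log_pow]
    push_cast; ring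
  have logT2 : Real.log T2 = Real.log ((l:ℝ) + 1) + (s + l) * Real.log (8 * (n:ℝ) ^ 2) +
      s * Real.log |(x1:ℝ)| + ((l:ℝ) - s) * Real.log |(y1:ℝ)| + Real.log |(v1:ℝ)| + Real.log |(z2:ℝ)| := by
    rw [hT2, Real.log_mul (by positivity) (by positivity), Real.log_mul (by positivity) (by positivity),
      Real.log_mul (by positivity) (by positivity), Real.log_mul (by positivity) (by positivity),
      Real.log_mul (by positivity) (by positivity),
      Real.log_pow, Real.log_pow, Real.log_pow, Nat.cast_sub (by omega)]
    push_cast; ring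
  rcases le_total T2 T1 with h | h
  · left
    have h1 : Real.log |((DD n s l x1 y1 z1 v1 z2 v2 : ℤ) : ℝ)| ≤ Real.log (2 * T1) :=
      Real.log_le_log hDpos (by linarith)
    rw [Real.log_mul (by norm_num) hT1pos.ne', logT1] at h1
    linarith
  · right
    have h1 : Real.log |((DD n s l x1 y1 z1 v1 z2 v2 : ℤ) : ℝ)| ≤ Real.log (2 * T2) :=
      Real.log_le_log hDpos (by linarith)
    rw [Real.log_mul (by norm_num) hT2pos.ne', logT2] at h1
    linarith

/-- Normalised solutions, with `y = b * v ^ n`. -/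
structure NSol (n : ℕ) (S : Finset ℕ) (b x y z v : ℤ) : Prop where
  hx : IsSUnit S x
  hy : IsSUnit S y
  hz : z ≠ 0
  hfree : NthPowerFree n (Int.gcd x y)
  heq : x + y = z ^ n
  hle : |y| ≤ |x|
  hb : y = b * v ^ n
  hv : ∀ p ∈ S, (p : ℤ) ^ (y.natAbs.factorization p / n) ∣ v

lemma fact_pow_dvd (x : ℤ) (p k : ℕ) (h : k ≤ x.natAbs.factorization p) : (p : ℤ) ^ k ∣ x := by
  have h1 : p ^ k ∣ x.natAbs := (pow_dvd_pow p h).trans (Nat.ordProj_dvd _ _)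
  have h2 := Int.natCast_dvd.2 h1
  exact_mod_cast h2

lemma sol_ac (n : ℕ) (x y z : ℤ) (hfree : NthPowerFree n (Int.gcd x y))
    (heq : x + y = z ^ n) (hn : 2 ≤ n) (p : ℕ) (hp : p.Prime)
    (h : n ≤ x.natAbs.factorization p) : ¬ (p : ℤ) ∣ y := by
  intro hy
  have hpi : Prime (p : ℤ) := Nat.prime_iff_prime_int.1 hp
  have h1 := fact_pow_dvd x p n h
  have hpx : (p : ℤ) ∣ x := (dvd_pow_self _ (by omega)).trans h1
  have hz : (p : ℤ) ∣ z := hpi.dvd_of_dvd_pow (heq ▸ dvd_add hpx hy)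
  have hzn : (p : ℤ) ^ n ∣ z ^ n := pow_dvd_pow_of_dvd hz n
  have hyn : (p : ℤ) ^ n ∣ y := by
    rw [← heq] at hzn
    exact (dvd_add_right h1).1 hzn
  apply hfree p hp
  have := Int.dvd_coe_gcd h1 hyn
  exact_mod_cast this

lemma per_p (n s l a1 a2 c1 c2 : ℕ) (L X1 δ : ℝ) (hn : 2 ≤ n) (hs : 1 ≤ s) (hl : 3 * s ≤ l)
    (hL : 0 ≤ L) (hX1 : 0 ≤ X1) (hδ : 0 ≤ δ) (hac : n ≤ a1 → c1 = 0)
    (hA : 4 * s * (a1 * L) - 4 * s * δ * X1 ≤ a2 * L)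
    (hC : 4 * s * (c1 * L) - 4 * s * δ * X1 ≤ c2 * L) :
    4 * s * (a1 * L) + 4 * s * (c1 * L / n) - 8 * s * n * L - 8 * s * δ * X1 ≤
      ((if n ≤ a1 then min a2 ((s + l + 1) * a1) else
        if n ≤ c1 then min (c2 / n) ((l - s) * c1) else 0 : ℕ) : ℝ) * L := by
  have hnR : (2:ℝ) ≤ n := by exact_mod_cast hn
  have hsR : (1:ℝ) ≤ s := by exact_mod_cast hs
  have hlR : (3:ℝ) * s ≤ l := by exact_mod_cast hl
  have e1 : 0 ≤ s * δ * X1 := by positivity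
  have e2 : 0 ≤ s * n * L := by positivity
  have e3 : s * L ≤ s * n * L := by
    have : s * 1 * L ≤ s * n * L := by gcongr; linarith
    linarith
  have e4 : L ≤ s * L := by nlinarith
  split_ifs with h1 h2
  · rw [hac h1]
    have key : 4 * s * (a1 * L) - 4 * s * δ * X1 ≤ (min (a2:ℝ) ((s + l + 1) * a1)) * L := by
      rcases le_total (a2:ℝ) ((s + l + 1) * a1) with h | h
      · rw [min_eq_left h]; exact hA
      · rw [min_eq_right h]
        have e5 : 0 ≤ a1 * L := by positivity
        have : (4 * s) * (a1 * L) ≤ (s + l + 1) * (a1 * L) := by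
          apply mul_le_mul_of_nonneg_right _ e5; linarith
        linarith
    push_cast
    simp only [zero_mul, zero_div, mul_zero, add_zero]
    linarith
  · have ha : (a1:ℝ) ≤ n := by exact_mod_cast (by omega : a1 ≤ n)
    have e5 : 4 * s * (a1 * L) ≤ 4 * (s * n * L) := by
      have : 4 * s * (a1 * L) ≤ 4 * s * (n * L) := by gcongr
      linarith
    have key : 4 * s * (c1 * L / n) - 4 * s * δ * X1 - L ≤
        (((min (c2 / n) ((l - s) * c1) : ℕ)) : ℝ) * L := by
      rcases le_total (c2 / n) ((l - s) * c1) with h | h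
      · rw [min_eq_left h]
        have f1 : (c2:ℝ) / n ≤ ((c2 / n : ℕ) : ℝ) + 1 := by
          rw [div_le_iff₀ (by linarith)]
          have : c2 ≤ (c2 / n + 1) * n := by
            have := Nat.div_add_mod c2 n
            have := Nat.mod_lt c2 (by omega : n > 0)
            nlinarith
          exact_mod_cast this
        have f2 : (4 * s * (c1 * L) - 4 * s * δ * X1) / n ≤ (c2 * L) / n := by gcongr
        have f3 : (c2 * L) / n ≤ (((c2 / n : ℕ) : ℝ) + 1) * L := by
          have : (c2:ℝ) / n * L ≤ (((c2 / n : ℕ) : ℝ) + 1) * L := by gcongr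
          calc (c2 * L) / n = (c2:ℝ) / n * L := by ring
            _ ≤ _ := this
        have f4 : (4 * s * δ * X1) / n ≤ 4 * s * δ * X1 := by
          apply div_le_self (by positivity); linarith
        have f5 : (4 * s * (c1 * L) - 4 * s * δ * X1) / n =
          4 * s * (c1 * L / n) - (4 * s * δ * X1) / n := by ring
        linarith
      · rw [min_eq_right h]
        push_cast [Nat.cast_sub (by omega : s ≤ l)]
        have f1 : c1 * L / n ≤ c1 * L / 2 := by gcongr
        have f2 : 4 * s * (c1 * L / n) ≤ 4 * s * (c1 * L / 2) := by gcongr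
        have f3 : (2 * s) * (c1 * L) ≤ ((l:ℝ) - s) * (c1 * L) := by
          gcongr; linarith
        linarith
    linarith
  · have ha : (a1:ℝ) ≤ n := by exact_mod_cast (by omega : a1 ≤ n)
    have hc : (c1:ℝ) ≤ n := by exact_mod_cast (by omega : c1 ≤ n)
    have e5 : 4 * s * (a1 * L) ≤ 4 * (s * n * L) := by
      have : 4 * s * (a1 * L) ≤ 4 * s * (n * L) := by gcongr
      linarith
    have e6 : 4 * s * (c1 * L / n) ≤ 4 * (s * L) := by
      have : 4 * s * (c1 * L / n) ≤ 4 * s * (n * L / n) := by gcongr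
      rw [mul_div_cancel_left₀ _ (by linarith : (n:ℝ) ≠ 0)] at this
      linarith
    push_cast
    linarith

lemma scaled (s X1 X2 A1 A2 δ : ℝ) (hs : 0 ≤ s) (hX1 : 0 < X1) (hX : 4 * s * X1 ≤ X2) (hX2 : 0 < X2)
    (hA2 : 0 ≤ A2) (h : |A2 / X2 - A1 / X1| ≤ δ) : 4 * s * A1 - 4 * s * δ * X1 ≤ A2 := by
  have h1 := (abs_le.1 h).1
  have h2 : A1 / X1 - δ ≤ A2 / X2 := by linarith
  have hA : 4 * s * A1 - 4 * s * δ * X1 = 4 * s * X1 * (A1 / X1 - δ) := by field_simp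
  rw [hA]
  by_cases h0 : 0 ≤ A1 / X1 - δ
  · calc 4 * s * X1 * (A1 / X1 - δ) ≤ X2 * (A1 / X1 - δ) := by gcongr
      _ ≤ X2 * (A2 / X2) := by gcongr
      _ = A2 := by field_simp
  · have : 4 * s * X1 * (A1 / X1 - δ) ≤ 0 := by
      apply mul_nonpos_of_nonneg_of_nonpos (by positivity) (by linarith)
    linarith

lemma pair_contra (n : ℕ) (hn : 2 ≤ n) (S : Finset ℕ) (hS : ∀ p ∈ S, p.Prime) (b : ℤ)
    (x1 y1 z1 v1 x2 y2 z2 v2 : ℤ) (s1 : NSol n S b x1 y1 z1 v1) (s2 : NSol n S b x2 y2 z2 v2)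
    (δ : ℝ) (hδ : 0 ≤ δ) (hδS : δ * S.card ≤ 1 / 100)
    (hX1 : 2 * (KK n + 8 * n * (∑ p ∈ S, Real.log p) + 1) < Real.log |(x1:ℝ)|)
    (hX2 : 80 * Real.log |(x1:ℝ)| ≤ Real.log |(x2:ℝ)|)
    (hX1p : 0 < Real.log |(x1:ℝ)|)
    (hA : ∀ p ∈ S, |(x2.natAbs.factorization p * Real.log p / Real.log |(x2:ℝ)| -
      x1.natAbs.factorization p * Real.log p / Real.log |(x1:ℝ)|)| ≤ δ)
    (hC : ∀ p ∈ S, |(y2.natAbs.factorization p * Real.log p / Real.log |(x2:ℝ)| -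
      y1.natAbs.factorization p * Real.log p / Real.log |(x1:ℝ)|)| ≤ δ)
    (hna : ∀ p ∈ S, n ≤ x1.natAbs.factorization p → n ≤ x2.natAbs.factorization p)
    (hmod : ∀ p ∈ S, ((n * p : ℕ) : ℤ) ∣ z1 * v2 - v1 * z2) : False := by
  set X1 := Real.log |(x1:ℝ)| with hX1d
  set X2 := Real.log |(x2:ℝ)| with hX2d
  have hX2p : 0 < X2 := by linarith
  set s : ℕ := ⌊X2 / (4 * X1)⌋₊ with hs
  have hs20 : 20 ≤ s := by
    rw [hs]; apply Nat.le_floor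
    rw [le_div_iff₀ (by positivity)]
    push_cast; linarith
  have hs20R : (20:ℝ) ≤ s := by exact_mod_cast hs20
  have hsa : 4 * s * X1 ≤ X2 := by
    have := Nat.floor_le (show 0 ≤ X2 / (4 * X1) by positivity)
    rw [← hs, le_div_iff₀ (by positivity)] at this
    linarith
  have hsb : X2 ≤ 4 * (s + 1) * X1 := by
    have := (Nat.lt_floor_add_one (X2 / (4 * X1))).le
    rw [← hs, div_le_iff₀ (by positivity)] at this
    linarith
  have hx1 := s1.hx.1
  have hy1 := s1.hy.1
  have hx2 := s2.hx.1
  have hy2 := s2.hy.1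
  have hv1 : v1 ≠ 0 := by
    rintro rfl; apply hy1; rw [s1.hb, zero_pow (by omega), mul_zero]
  have hv2 : v2 ≠ 0 := by
    rintro rfl; apply hy2; rw [s2.hb, zero_pow (by omega), mul_zero]
  have hb0 : b ≠ 0 := by
    rintro rfl; apply hy2; rw [s2.hb, zero_mul]
  obtain ⟨l, hl1, hl2, hD⟩ : ∃ l, 3 * s ≤ l ∧ l ≤ 3 * s + 1 ∧ DD n s l x1 y1 z1 v1 z2 v2 ≠ 0 := by
    rcases DD_ne_zero n s (3 * s) hn (by omega) x1 y1 z1 v1 z2 v2 hx1 hy1 hv1 s2.hz with h | h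
    · exact ⟨3 * s, le_rfl, by omega, h⟩
    · exact ⟨3 * s + 1, by omega, le_rfl, h⟩
  have hup := DD_upper n s l hn (by omega) hl1 hl2 x1 y1 z1 v1 z2 v2 hx1 hy1 s1.hz hv1 s2.hz hv2
    s1.hle hD
  set E : ℤ := (n : ℤ) ^ (s + l + 1) * DD n s l x1 y1 z1 v1 z2 v2 with hE
  have hE0 : E ≠ 0 := by
    apply mul_ne_zero _ hD
    apply pow_ne_zero
    exact_mod_cast (by omega : n ≠ 0)
  let e : ℕ → ℕ := fun p => if n ≤ x1.natAbs.factorization p then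
      min (x2.natAbs.factorization p) ((s + l + 1) * x1.natAbs.factorization p) else
      if n ≤ y1.natAbs.factorization p then
        min (y2.natAbs.factorization p / n) ((l - s) * y1.natAbs.factorization p) else 0
  have hdvd : ∀ p ∈ S, (p : ℤ) ^ e p ∣ E := by
    intro p hp
    simp only [e]
    split_ifs with h1 h2
    · have h2 := hna p hp h1
      set a1 := x1.natAbs.factorization p with ha1
      set a2 := x2.natAbs.factorization p with ha2
      refine local_a p n s l (min a1 a2) _ (hS p hp) hn (by omega) x1 y1 z1 v1 x2 y2 z2 v2 b
        s1.hb s2.hb s1.heq s2.heq (sol_ac n x1 y1 z1 s1.hfree s1.heq hn p (hS p hp) h1)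
        (sol_ac n x2 y2 z2 s2.hfree s2.heq hn p (hS p hp) h2) ?_ (fact_pow_dvd _ _ _ (min_le_left _ _))
        (fact_pow_dvd _ _ _ (min_le_right _ _)) (fact_pow_dvd _ _ _ (min_le_left _ _)) ?_ (hmod p hp)
      · have := fact_pow_dvd x2 p 1 (by omega)
        simpa using this
      · rcases le_total a1 a2 with h | h
        · rw [min_eq_left h, mul_comm a1]
          exact min_le_right _ _
        · rw [min_eq_right h]
          refine (min_le_left _ _).trans ?_
          exact Nat.le_mul_of_pos_right _ (by omega)
    · apply local_c
      · exact (pow_dvd_pow _ (min_le_left _ _)).trans (s2.hv p hp)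
      · refine (pow_dvd_pow _ (min_le_right _ _)).trans ?_
        rw [mul_comm, pow_mul]
        exact pow_dvd_pow_of_dvd (fact_pow_dvd _ _ _ le_rfl) _
    · simp
  have hlow := log_lower S hS e E hE0 hdvd
  have hsx1 := sunit_log S x1 s1.hx
  have hsy1 := sunit_log S y1 s1.hy
  have hsy2 := sunit_log S y2 s2.hy
  rw [← hX1d] at hsx1
  set Y1 := Real.log |(y1:ℝ)| with hY1d
  set Y2 := Real.log |(y2:ℝ)| with hY2d
  have absone : ∀ t : ℤ, t ≠ 0 → (1:ℝ) ≤ |(t:ℝ)| := by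
    intro t ht
    exact_mod_cast Int.one_le_abs ht
  have hY1 : 0 ≤ Y1 := Real.log_nonneg (absone _ hy1)
  have hYX : Y1 ≤ X1 := by
    apply Real.log_le_log (by linarith [absone _ hy1])
    exact_mod_cast s1.hle
  have hLp : ∀ p : ℕ, 0 ≤ Real.log p := fun p => Real.log_natCast_nonneg p
  have hper : ∀ p ∈ S, 4 * s * (x1.natAbs.factorization p * Real.log p) +
      4 * s * (y1.natAbs.factorization p * Real.log p / n) - 8 * s * n * Real.log p - 8 * s * δ * X1
      ≤ e p * Real.log p := by
    intro p hp
    have hsc1 := scaled s X1 X2 _ _ δ (by linarith) hX1p hsa hX2p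
      (mul_nonneg (Nat.cast_nonneg _) (hLp p)) (hA p hp)
    have hsc2 := scaled s X1 X2 _ _ δ (by linarith) hX1p hsa hX2p
      (mul_nonneg (Nat.cast_nonneg _) (hLp p)) (hC p hp)
    refine per_p n s l _ _ _ _ (Real.log p) X1 δ hn (by omega) hl1 (hLp p) hX1p.le hδ ?_ hsc1 hsc2
    intro h
    have := sol_ac n x1 y1 z1 s1.hfree s1.heq hn p (hS p hp) h
    apply Nat.factorization_eq_zero_of_not_dvd
    rwa [Int.natCast_dvd] at this
  have hsum := Finset.sum_le_sum hper
  rw [Finset.sum_sub_distrib, Finset.sum_sub_distrib, Finset.sum_add_distrib, ← Finset.mul_sum,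
    ← Finset.mul_sum, ← Finset.mul_sum, ← Finset.sum_div, hsx1, hsy1, Finset.sum_const, nsmul_eq_mul] at hsum
  have hY2 : Y2 * X1 ≤ X2 * (Y1 + (δ * S.card) * X1) := by
    have : ∀ p ∈ S, y2.natAbs.factorization p * Real.log p * X1 ≤
        X2 * (y1.natAbs.factorization p * Real.log p + δ * X1) := by
      intro p hp
      have h1 := (abs_le.1 (hC p hp)).2
      have h2 : y2.natAbs.factorization p * Real.log p / X2 ≤
        y1.natAbs.factorization p * Real.log p / X1 + δ := by linarith
      rw [div_le_iff₀ hX2p] at h2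
      have h3 := mul_le_mul_of_nonneg_right h2 hX1p.le
      refine h3.trans (le_of_eq ?_)
      field_simp
    have := Finset.sum_le_sum this
    rw [← Finset.sum_mul, ← Finset.mul_sum, Finset.sum_add_distrib, hsy1, hsy2, Finset.sum_const,
      nsmul_eq_mul] at this
    linarith
  have hlog2 : Real.log 2 ≤ 1 := by
    have := Real.log_le_sub_one_of_pos (show (0:ℝ) < 2 by norm_num)
    linarith
  have hzlog : ∀ x y z v : ℤ, NSol n S b x y z v →
      n * Real.log |(z:ℝ)| ≤ Real.log |(x:ℝ)| + 1 := by
    intro x y z v hs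
    have h1 : |z| ^ n ≤ 2 * |x| := by
      rw [← abs_pow, ← hs.heq]
      have := abs_add_le x y
      have := hs.hle
      linarith
    have h2 : |(z:ℝ)| ^ n ≤ 2 * |(x:ℝ)| := by exact_mod_cast h1
    have h3 := absone _ hs.hz
    have h4 := absone _ hs.hx.1
    have h5 := Real.log_le_log (by positivity) h2
    rw [Real.log_pow, Real.log_mul (by norm_num) (by positivity)] at h5
    linarith
  have hvlog : ∀ x y z v : ℤ, NSol n S b x y z v → v ≠ 0 →
      n * Real.log |(v:ℝ)| ≤ Real.log |(y:ℝ)| := by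
    intro x y z v hs hv
    have h1 : |v| ^ n ≤ |y| := by
      rw [hs.hb, abs_mul, abs_pow]
      have := Int.one_le_abs hb0
      exact le_mul_of_one_le_left (by positivity) this
    have h2 : |(v:ℝ)| ^ n ≤ |(y:ℝ)| := by exact_mod_cast h1
    have h3 := absone _ hv
    have h5 := Real.log_le_log (by positivity) h2
    rwa [Real.log_pow] at h5
  have hfin := real_aux n s X1 X2 Y1 Y2 (δ * S.card) _ _ _ _ l _ (KK n) (∑ p ∈ S, Real.log p)
    (by exact_mod_cast hn) hs20R hX1p hY1 hYX hsa hsb hY2 (by positivity) hδS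
    (hzlog _ _ _ _ s1) (hvlog _ _ _ _ s2 hv2) (hvlog _ _ _ _ s1 hv1) (hzlog _ _ _ _ s2)
    (by exact_mod_cast hl2) (by linarith) hup
  linarith

/-- the `n`th power part of `y` -/
noncomputable def vpart (n : ℕ) (S : Finset ℕ) (y : ℤ) : ℤ :=
  ∏ p ∈ S, (p : ℤ) ^ (y.natAbs.factorization p / n)

/-- the signed remaining part of `y` -/
noncomputable def bpart (n : ℕ) (S : Finset ℕ) (y : ℤ) : ℤ :=
  (if 0 < y then 1 else -1) * ∏ p ∈ S, (p : ℤ) ^ (y.natAbs.factorization p % n)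

lemma bv_eq (n : ℕ) (S : Finset ℕ) (y : ℤ) (hy : IsSUnit S y) :
    y = bpart n S y * vpart n S y ^ n := by
  obtain ⟨hx0, hxp⟩ := hy
  have h0 : y.natAbs ≠ 0 := Int.natAbs_ne_zero.2 hx0
  have h1 := Nat.prod_factorization_pow_eq_self h0
  rw [Finsupp.prod_of_support_subset (s := S) _ _ _ (by simp)] at h1
  · have h2 : (y.natAbs : ℤ) = (∏ p ∈ S, (p : ℤ) ^ (y.natAbs.factorization p % n)) * vpart n S y ^ n := by
      rw [vpart, ← Finset.prod_pow, ← Finset.prod_mul_distrib]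
      conv_lhs => rw [← h1]
      push_cast
      apply Finset.prod_congr rfl
      intro p hp
      rw [← pow_mul, ← pow_add]
      congr 1
      have := Nat.mod_add_div (y.natAbs.factorization p) n
      rw [mul_comm] at this
      linarith
    rw [bpart, mul_assoc, ← h2]
    split_ifs with h
    · omega
    · omega
  · intro p hp
    have hpp : p.Prime := Nat.prime_of_mem_primeFactors hp
    exact hxp p hpp (Int.natCast_dvd.2 (Nat.dvd_of_mem_primeFactors hp))

lemma ofNat_inj (M a b : ℕ) (ha : a ≤ M) (hb : b ≤ M) (h : Fin.ofNat (M + 1) a = Fin.ofNat (M + 1) b) :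
    a = b := by
  have := congrArg Fin.val h
  simp only [Fin.val_ofNat] at this
  rwa [Nat.mod_eq_of_lt (by omega), Nat.mod_eq_of_lt (by omega)] at this

lemma floor_close (M : ℕ) (hM : 0 < M) (r1 r2 : ℝ) (h1 : 0 ≤ r1) (h1' : r1 ≤ 1) (h2 : 0 ≤ r2)
    (h2' : r2 ≤ 1) (h : Fin.ofNat (M + 1) ⌊M * r1⌋₊ = Fin.ofNat (M + 1) ⌊M * r2⌋₊) :
    |r2 - r1| ≤ 1 / M := by
  have hMR : (0:ℝ) < M := by exact_mod_cast hM
  have hb : ∀ r : ℝ, 0 ≤ r → r ≤ 1 → ⌊M * r⌋₊ ≤ M := by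
    intro r hr hr'
    apply Nat.floor_le_of_le
    nlinarith
  have hf := ofNat_inj M _ _ (hb _ h1 h1') (hb _ h2 h2') h
  have a1 := Nat.floor_le (show 0 ≤ M * r1 by positivity)
  have a2 := Nat.floor_le (show 0 ≤ M * r2 by positivity)
  have b1 := Nat.lt_floor_add_one (M * r1)
  have b2 := Nat.lt_floor_add_one (M * r2)
  rw [hf] at a1 b1
  rw [le_div_iff₀ hMR, ← abs_of_pos hMR, ← abs_mul, abs_le]
  constructor <;> nlinarith

lemma ratio_bounds (S : Finset ℕ) (x y : ℤ) (hy : IsSUnit S y) (hle : |y| ≤ |x|)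
    (p : ℕ) (hp : p ∈ S) :
    0 ≤ y.natAbs.factorization p * Real.log p / Real.log |(x:ℝ)| ∧
    y.natAbs.factorization p * Real.log p / Real.log |(x:ℝ)| ≤ 1 := by
  have h1 : (1:ℝ) ≤ |(y:ℝ)| := by exact_mod_cast Int.one_le_abs hy.1
  have h2 : |(y:ℝ)| ≤ |(x:ℝ)| := by exact_mod_cast hle
  have h3 : 0 ≤ Real.log |(x:ℝ)| := Real.log_nonneg (by linarith)
  have hnn : ∀ q ∈ S, 0 ≤ (y.natAbs.factorization q : ℝ) * Real.log q :=
    fun q _ => mul_nonneg (Nat.cast_nonneg _) (Real.log_natCast_nonneg q)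
  refine ⟨div_nonneg (hnn p hp) h3, div_le_one_of_le₀ ?_ h3⟩
  refine (Finset.single_le_sum hnn hp).trans ?_
  rw [sunit_log S y hy]
  exact Real.log_le_log (by linarith) h2

lemma bounded_finite (n : ℕ) (hn : 2 ≤ n) (B : ℤ) :
    {t : ℤ × ℤ × ℤ | |t.1| ≤ B ∧ |t.2.1| ≤ |t.1| ∧ t.1 + t.2.1 = t.2.2 ^ n}.Finite := by
  apply Set.Finite.subset ((Set.finite_Icc (-B) B).prod
    ((Set.finite_Icc (-B) B).prod (Set.finite_Icc (-(2 * B)) (2 * B))))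
  rintro ⟨x, y, z⟩ ⟨h1, h2, h3⟩
  simp only at h1 h2 h3
  have hz : |z| ≤ 2 * B := by
    have h4 : |z| ^ n ≤ 2 * B := by
      rw [← abs_pow, ← h3]
      have := abs_add_le x y
      linarith
    by_cases hz0 : z = 0
    · subst hz0
      have := abs_nonneg x
      simp; linarith
    · have h5 : |z| ≤ |z| ^ n := le_self_pow₀ (Int.one_le_abs hz0) (by omega)
      linarith
  simp only [Set.mem_prod, Set.mem_Icc]
  exact ⟨abs_le.1 h1, abs_le.1 (h2.trans h1), abs_le.1 hz⟩

/-- The solutions with `|y| ≤ |x|`. -/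
def USet (S : Finset ℕ) (n : ℕ) : Set (ℤ × ℤ × ℤ) :=
  {t | IsSUnit S t.1 ∧ IsSUnit S t.2.1 ∧ t.2.2 ≠ 0 ∧ NthPowerFree n (Int.gcd t.1 t.2.1) ∧
    t.1 + t.2.1 = t.2.2 ^ n ∧ |t.2.1| ≤ |t.1|}

lemma nsol_of (S : Finset ℕ) (n : ℕ) (b x y z : ℤ) (h : (x, y, z) ∈ USet S n)
    (hb : bpart n S y = b) : NSol n S b x y z (vpart n S y) := by
  obtain ⟨h1, h2, h3, h4, h5, h6⟩ := h
  refine ⟨h1, h2, h3, h4, h5, h6, ?_, ?_⟩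
  · rw [← hb]; exact bv_eq n S y h2
  · intro p hp
    exact Finset.dvd_prod_of_mem (fun p : ℕ => (p : ℤ) ^ (y.natAbs.factorization p / n)) hp

lemma USet_finite (S : Finset ℕ) (hS : ∀ p ∈ S, p.Prime) (n : ℕ) (hn : 2 ≤ n) : (USet S n).Finite := by
  by_contra hinf
  have hinf : (USet S n).Infinite := hinf
  have : Infinite (USet S n) := hinf.to_subtype
  set M : ℕ := 100 * S.card + 1 with hM
  set m : ℕ := n * ∏ p ∈ S, p with hm
  have hm0 : m ≠ 0 := by
    apply mul_ne_zero (by omega)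
    exact Finset.prod_ne_zero_iff.2 (fun p hp => (hS p hp).ne_zero)
  have : NeZero m := ⟨hm0⟩
  let key : USet S n → Bool × (S → Fin (n + 1)) × (S → Fin (n + 1)) × ZMod m × ZMod m ×
      (S → Fin (M + 1)) × (S → Fin (M + 1)) := fun t =>
    (decide (0 < t.1.2.1), fun p => Fin.ofNat (n + 1) (t.1.2.1.natAbs.factorization p % n),
      fun p => Fin.ofNat (n + 1) (min (t.1.1.natAbs.factorization p) n),
      (t.1.2.2 : ZMod m), (vpart n S t.1.2.1 : ZMod m),
      fun p => Fin.ofNat (M + 1)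
        ⌊M * (t.1.1.natAbs.factorization p * Real.log p / Real.log |(t.1.1:ℝ)|)⌋₊,
      fun p => Fin.ofNat (M + 1)
        ⌊M * (t.1.2.1.natAbs.factorization p * Real.log p / Real.log |(t.1.1:ℝ)|)⌋₊)
  obtain ⟨c, hc⟩ := Finite.exists_infinite_fiber key
  have hT : (Subtype.val '' (key ⁻¹' {c})).Infinite := by
    apply Set.Infinite.image Subtype.val_injective.injOn
    exact Set.infinite_coe_iff.1 hc
  have big : ∀ R : ℝ, ∃ t : USet S n, key t = c ∧ R < Real.log |(t.1.1:ℝ)| := by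
    intro R
    obtain ⟨t, ht, htn⟩ := hT.exists_notMem_finite (bounded_finite n hn ⌈Real.exp R⌉)
    obtain ⟨u, hu, rfl⟩ := ht
    refine ⟨u, hu, ?_⟩
    by_contra! hR
    apply htn
    have hmem := u.2
    obtain ⟨h1, h2, h3, h4, h5, h6⟩ := hmem
    refine ⟨?_, h6, h5⟩
    have hpos : 0 < |(u.1.1:ℝ)| := by
      rw [abs_pos]; exact_mod_cast h1.1
    have h7 := (Real.log_le_iff_le_exp hpos).1 hR
    have h8 := h7.trans (Int.le_ceil (Real.exp R))
    exact_mod_cast h8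
  obtain ⟨⟨⟨x1, y1, z1⟩, ht1⟩, hk1, hX1⟩ :=
    big (max 0 (2 * (KK n + 8 * n * (∑ p ∈ S, Real.log p) + 1)))
  obtain ⟨⟨⟨x2, y2, z2⟩, ht2⟩, hk2, hX2⟩ := big (80 * Real.log |(x1:ℝ)|)
  have hk := hk1.trans hk2.symm
  simp only [key, Prod.mk.injEq] at hk hX1 hX2
  obtain ⟨k1, k2, k3, k4, k5, k6, k7⟩ := hk
  have hbb : bpart n S y1 = bpart n S y2 := by
    have k1' : (0 < y1) ↔ (0 < y2) := by simpa using k1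
    rw [bpart, bpart]
    congr 1
    · simp only [k1']
    · apply Finset.prod_congr rfl
      intro p hp
      have := ofNat_inj n _ _ (Nat.mod_lt _ (by omega)).le (Nat.mod_lt _ (by omega)).le
        (congrFun k2 ⟨p, hp⟩)
      simp only at this
      rw [this]
  have s1 := nsol_of S n _ x1 y1 z1 ht1 hbb
  have s2 := nsol_of S n _ x2 y2 z2 ht2 rfl
  refine pair_contra n hn S hS _ x1 y1 z1 _ x2 y2 z2 _ s1 s2 (1 / M) (by positivity) ?_
    ((le_max_right _ _).trans_lt hX1) hX2.le ((le_max_left _ _).trans_lt hX1) ?_ ?_ ?_ ?_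
  · rw [one_div, inv_mul_le_iff₀ (by positivity), hM]
    push_cast
    linarith
  · intro p hp
    have r1 := ratio_bounds S x1 x1 s1.hx le_rfl p hp
    have r2 := ratio_bounds S x2 x2 s2.hx le_rfl p hp
    exact floor_close M (by omega) _ _ r1.1 r1.2 r2.1 r2.2 (congrFun k6 ⟨p, hp⟩)
  · intro p hp
    have r1 := ratio_bounds S x1 y1 s1.hy s1.hle p hp
    have r2 := ratio_bounds S x2 y2 s2.hy s2.hle p hp
    exact floor_close M (by omega) _ _ r1.1 r1.2 r2.1 r2.2 (congrFun k7 ⟨p, hp⟩)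
  · intro p hp h
    have := ofNat_inj n _ _ (min_le_right _ _) (min_le_right _ _) (congrFun k3 ⟨p, hp⟩)
    simp only at this
    omega
  · intro p hp
    have hdm : (m : ℤ) ∣ z1 * vpart n S y2 - vpart n S y1 * z2 := by
      rw [← ZMod.intCast_zmod_eq_zero_iff_dvd]
      push_cast
      rw [k4, k5]
      ring
    refine dvd_trans ?_ hdm
    rw [hm]
    exact_mod_cast Nat.mul_dvd_mul_left n (Finset.dvd_prod_of_mem (fun p : ℕ => p) hp)

end

theorem finitely_many_solutions_fixed_exponent
    (S : Finset ℕ) (hS : ∀ p ∈ S, p.Prime) (n : ℕ) (hn : 2 ≤ n) :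
    {t : ℤ × ℤ × ℤ | IsSUnit S t.1 ∧ IsSUnit S t.2.1 ∧ t.2.2 ≠ 0 ∧
      NthPowerFree n (Int.gcd t.1 t.2.1) ∧
      t.1 + t.2.1 = t.2.2 ^ n}.Finite := by
  have hU := USet_finite S hS n hn
  apply Set.Finite.subset (hU.union (hU.image (fun t : ℤ × ℤ × ℤ => (t.2.1, t.1, t.2.2))))
  rintro ⟨x, y, z⟩ ⟨h1, h2, h3, h4, h5⟩
  rcases le_total |y| |x| with h | h
  · exact Or.inl ⟨h1, h2, h3, h4, h5, h⟩
  · refine Or.inr ⟨(y, x, z), ⟨h2, h1, h3, ?_, ?_, h⟩, rfl⟩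
    · simpa only [Int.gcd_comm] using h4
    · simpa only [add_comm] using h5
end
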